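/- arXiv:0905.0867 — 2 statements merged into one kernel-verified Lean document; each statement's English description precedes it below -/
import Mathlib

section
/- For every n ≥ 2 there exists δ = δ(n) > 0 with the following property: if K ⊂ ℝⁿ is an origin-symmetric convex body for which there exists T ∈ GL(n,ℝ) with B∞ⁿ ⊆ T(K) ⊆ (1+δ)·B∞ⁿ, and K is not a parallelepiped (i.e., K ≠ S(B∞ⁿ) for every S ∈ GL(n,ℝ)), then the strict inequality volₙ(K)·volₙ(K*) > 4ⁿ/n! holds. Equivalently, equality volₙ(K)·volₙ(K*) = 4ⁿ/n! among such K occurs only when K is a linear image of the cube. -/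
open MeasureTheory RealInnerProductSpace ENNReal Pointwise

noncomputable section

/-- The unit cube `B∞ⁿ = {x : |xᵢ| ≤ 1 ∀ i}`. -/
def cube (n : ℕ) : Set (EuclideanSpace ℝ (Fin n)) := {x | ∀ i, |x i| ≤ 1}

/-- The polar body `K* = {ξ : ⟨x, ξ⟩ ≤ 1 ∀ x ∈ K}`. -/
def polarBody {n : ℕ} (K : Set (EuclideanSpace ℝ (Fin n))) :
    Set (EuclideanSpace ℝ (Fin n)) :=
  {ξ | ∀ x ∈ K, ⟪x, ξ⟫ ≤ 1}

namespace CubeMahler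

/-- Flags of faces of the cube: an order of the coordinates together with a choice of signs. -/
abbrev Flag (n : ℕ) := Equiv.Perm (Fin n) × (Fin n → ℤˣ)

/-- The sign `ε i` as a real number. -/
def sg {n : ℕ} (f : Flag n) (i : Fin n) : ℝ := ((f.2 i : ℤ) : ℝ)

/-- The sign vector of the `k`-th face in the flag. -/
def face {n : ℕ} (f : Flag n) (k : Fin n) : Fin n → ℤ :=
  fun i => if f.1.symm i ≤ k then (f.2 i : ℤ) else 0

/-- The matrix whose rows are the points attached to the faces of a flag. -/
def fmat {n : ℕ} (P : (Fin n → ℤ) → (Fin n → ℝ)) (f : Flag n) : Matrix (Fin n) (Fin n) ℝ :=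
  Matrix.of fun k i => P (face f k) i

/-- Face centres. -/
def ctr {n : ℕ} (s : Fin n → ℤ) : Fin n → ℝ := fun i => (s i : ℝ)

lemma sg_mul_self {n : ℕ} (f : Flag n) (i : Fin n) : sg f i * sg f i = 1 := by
  unfold sg
  rcases Int.units_eq_one_or (f.2 i) with h | h <;> simp [h]

lemma sg_eq {n : ℕ} (f : Flag n) (i : Fin n) : sg f i = 1 ∨ sg f i = -1 := by
  unfold sg
  rcases Int.units_eq_one_or (f.2 i) with h | h <;> simp [h]

lemma abs_sg {n : ℕ} (f : Flag n) (i : Fin n) : |sg f i| = 1 := by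
  rcases sg_eq f i with h | h <;> simp [h]

lemma ctr_face {n : ℕ} (f : Flag n) (k i : Fin n) :
    ctr (face f k) i = if f.1.symm i ≤ k then sg f i else 0 := by
  unfold ctr face sg
  split_ifs <;> simp

/-- the tail sum formula -/
lemma vecMul_ctr {n : ℕ} (f : Flag n) (θ : Fin n → ℝ) (l : Fin n) :
    (Matrix.vecMul θ (fmat ctr f)) (f.1 l) = sg f (f.1 l) * ∑ k with l ≤ k, θ k := by
  simp only [Matrix.vecMul, dotProduct, fmat, Matrix.of_apply, ctr_face, Equiv.symm_apply_apply]
  rw [Finset.sum_filter, Finset.mul_sum]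
  refine Finset.sum_congr rfl fun k _ => ?_
  split_ifs <;> ring

/-- contribution of the successor index -/
def nxt {n : ℕ} (f : Flag n) (k : Fin n) (w : Fin n → ℝ) : ℝ :=
  if h : k.1 + 1 < n then sg f (f.1 ⟨k.1 + 1, h⟩) * w (f.1 ⟨k.1 + 1, h⟩) else 0

lemma tail_eq {n : ℕ} (f : Flag n) (θ : Fin n → ℝ) (l : Fin n) :
    ∑ k with l ≤ k, θ k = sg f (f.1 l) * (Matrix.vecMul θ (fmat ctr f)) (f.1 l) := by
  rw [vecMul_ctr, ← mul_assoc, sg_mul_self, one_mul]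

lemma tail_lt_eq {n : ℕ} (f : Flag n) (θ : Fin n → ℝ) (l : Fin n) :
    ∑ k with l < k, θ k = nxt f l (Matrix.vecMul θ (fmat ctr f)) := by
  unfold nxt
  split_ifs with h
  · rw [← tail_eq]
    refine Finset.sum_congr ?_ fun _ _ => rfl
    ext k
    simp only [Finset.mem_filter, Finset.mem_univ, true_and, Fin.lt_def, Fin.le_def]
    omega
  · refine Finset.sum_eq_zero fun k hk => ?_
    simp only [Finset.mem_filter, Finset.mem_univ, true_and, Fin.lt_def] at hk
    omega

lemma coef_eq {n : ℕ} (f : Flag n) (θ : Fin n → ℝ) (l : Fin n) :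
    θ l = sg f (f.1 l) * (Matrix.vecMul θ (fmat ctr f)) (f.1 l)
      - nxt f l (Matrix.vecMul θ (fmat ctr f)) := by
  rw [← tail_eq, ← tail_lt_eq]
  have : (Finset.univ.filter fun k => l ≤ k) = insert l (Finset.univ.filter fun k => l < k) := by
    ext k
    simp only [Finset.mem_filter, Finset.mem_univ, true_and, Finset.mem_insert]
    rw [le_iff_eq_or_lt, eq_comm]
  rw [this, Finset.sum_insert (by simp)]
  ring

lemma abs_nxt_le {n : ℕ} (f : Flag n) (k : Fin n) (w : Fin n → ℝ) (t : ℝ) (ht : 0 ≤ t)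
    (h : ∀ i, |w i| ≤ t) : |nxt f k w| ≤ t := by
  unfold nxt
  split_ifs with h1
  · rw [abs_mul, abs_sg, one_mul]; exact h _
  · simpa using ht

lemma coef_le {n : ℕ} (f : Flag n) (θ : Fin n → ℝ) (t : ℝ) (ht : 0 ≤ t)
    (h : ∀ i, |Matrix.vecMul θ (fmat ctr f) i| ≤ t) (l : Fin n) : |θ l| ≤ 2 * t := by
  rw [coef_eq f θ l]
  have h1 := abs_nxt_le f l _ t ht h
  have h2 : |sg f (f.1 l) * (Matrix.vecMul θ (fmat ctr f)) (f.1 l)| ≤ t := by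
    rw [abs_mul, abs_sg, one_mul]; exact h _
  refine (abs_sub _ _).trans ?_
  linarith

lemma abs_det_ctr {n : ℕ} (f : Flag n) : |(fmat ctr f).det| = 1 := by
  let Tri : Matrix (Fin n) (Fin n) ℝ := Matrix.of fun k l => if l ≤ k then 1 else 0
  have h1 : fmat ctr f = (Tri.submatrix (Equiv.refl _) f.1.symm) * Matrix.diagonal (sg f) := by
    ext k i
    rw [Matrix.mul_diagonal]
    simp only [fmat, Matrix.of_apply, ctr_face, Tri, Matrix.submatrix_apply, Equiv.refl_apply]
    split_ifs <;> simp
  have h2 : Tri.det = 1 := by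
    rw [Matrix.det_of_lowerTriangular]
    · simp [Tri]
    · intro i j hij
      have : i < j := by simpa using hij
      simp [Tri, not_le.mpr this]
  rw [h1, Matrix.det_mul, abs_mul, Matrix.abs_det_submatrix_equiv_equiv, h2, Matrix.det_diagonal,
    Finset.abs_prod]
  simp [abs_sg]

/-- Lower bound on perturbed vecMul -/
lemma coef_le_pert {n : ℕ} (P : (Fin n → ℤ) → (Fin n → ℝ)) (f : Flag n) (η : ℝ)
    (hη : 0 ≤ η) (hη' : 4 * n * η ≤ 1)
    (hP : ∀ k i, |P (face f k) i - ctr (face f k) i| ≤ η)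
    (θ : Fin n → ℝ) (t : ℝ) (ht : 0 ≤ t)
    (h : ∀ i, |Matrix.vecMul θ (fmat P f) i| ≤ t) (l : Fin n) : |θ l| ≤ 4 * t := by
  obtain ⟨l0, -, hl0⟩ := Finset.exists_max_image Finset.univ (fun l => |θ l|) ⟨l, Finset.mem_univ _⟩
  set W := |θ l0| with hW
  have hW0 : 0 ≤ W := abs_nonneg _
  have key : W ≤ 2 * (t + n * (W * η)) := by
    refine coef_le f θ _ (by positivity) (fun i => ?_) l0
    have : Matrix.vecMul θ (fmat ctr f) i = Matrix.vecMul θ (fmat P f) i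
        - ∑ k, θ k * (P (face f k) i - ctr (face f k) i) := by
      simp only [Matrix.vecMul, dotProduct, fmat, Matrix.of_apply, ← Finset.sum_sub_distrib]
      refine Finset.sum_congr rfl fun k _ => by ring
    rw [this]
    refine (abs_sub _ _).trans (add_le_add (h i) ?_)
    refine (Finset.abs_sum_le_sum_abs _ _).trans ?_
    calc _ ≤ ∑ k : Fin n, W * η := by
          refine Finset.sum_le_sum fun k _ => ?_
          rw [abs_mul]
          exact mul_le_mul (hl0 k (Finset.mem_univ _)) (hP k i) (abs_nonneg _) hW0
      _ = _ := by simp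
  have h3 := hl0 l (Finset.mem_univ _)
  have : 2 * n * (W * η) ≤ W / 2 := by nlinarith
  linarith

lemma fmat_det_ne {n : ℕ} (P : (Fin n → ℤ) → (Fin n → ℝ)) (f : Flag n) (η : ℝ)
    (hη : 0 ≤ η) (hη' : 4 * n * η ≤ 1)
    (hP : ∀ k i, |P (face f k) i - ctr (face f k) i| ≤ η) : (fmat P f).det ≠ 0 := by
  intro h0
  obtain ⟨v, hv, hv'⟩ := Matrix.exists_vecMul_eq_zero_iff.mpr h0
  apply hv
  ext l
  have := coef_le_pert P f η hη hη' hP v 0 le_rfl (by intro i; simp [hv']) l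
  simpa using this

/-- Solving for barycentric-type coordinates. -/
lemma exists_coef {n : ℕ} (P : (Fin n → ℤ) → (Fin n → ℝ)) (f : Flag n) (η : ℝ)
    (hη : 0 ≤ η) (hη' : 4 * n * η ≤ 1)
    (hP : ∀ k i, |P (face f k) i - ctr (face f k) i| ≤ η)
    (β₀ : Fin n → ℝ) (hβ₀ : ∀ k, |β₀ k| ≤ 1) (z : Fin n → ℝ) (t : ℝ) (ht : 0 ≤ t)
    (hz : ∀ i, |z i - Matrix.vecMul β₀ (fmat ctr f) i| ≤ t) :
    ∃ β : Fin n → ℝ, Matrix.vecMul β (fmat P f) = z ∧ ∀ k, |β k - β₀ k| ≤ 4 * (t + n * η) := by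
  have hu : IsUnit (fmat P f).det := (fmat_det_ne P f η hη hη' hP).isUnit
  refine ⟨Matrix.vecMul z (fmat P f)⁻¹, ?_, ?_⟩
  · rw [Matrix.vecMul_vecMul, Matrix.nonsing_inv_mul _ hu, Matrix.vecMul_one]
  · set β := Matrix.vecMul z (fmat P f)⁻¹ with hβ
    have hb : Matrix.vecMul β (fmat P f) = z := by
      rw [hβ, Matrix.vecMul_vecMul, Matrix.nonsing_inv_mul _ hu, Matrix.vecMul_one]
    refine coef_le_pert P f η hη hη' hP (fun k => β k - β₀ k) _ (by positivity) (fun i => ?_)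
    have h1 : Matrix.vecMul (fun k => β k - β₀ k) (fmat P f) i
        = (z i - Matrix.vecMul β₀ (fmat ctr f) i)
          - ∑ k, β₀ k * (P (face f k) i - ctr (face f k) i) := by
      have h2 : z i = ∑ k, β k * fmat P f k i := by
        rw [← hb]; rfl
      rw [h2]
      simp only [Matrix.vecMul, dotProduct, fmat, Matrix.of_apply, ← Finset.sum_sub_distrib]
      refine Finset.sum_congr rfl fun k _ => by ring
    rw [h1]
    refine (abs_sub _ _).trans (add_le_add (hz i) ?_)
    refine (Finset.abs_sum_le_sum_abs _ _).trans ?_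
    calc _ ≤ ∑ k : Fin n, η := by
          refine Finset.sum_le_sum fun k _ => ?_
          rw [abs_mul]
          calc _ ≤ 1 * η := mul_le_mul (hβ₀ k) (hP k i) (abs_nonneg _) zero_le_one
            _ = η := one_mul _
      _ = _ := by simp

lemma prod_one_add_approx {ι : Type*} [DecidableEq ι] (S : Finset ι) (a : ι → ℝ) (t : ℝ)
    (ht0 : 0 ≤ t) (ht1 : t ≤ 1) (ha : ∀ i, |a i| ≤ t) :
    |∏ i ∈ S, (1 + a i) - 1 - ∑ i ∈ S, a i| ≤ 4 ^ S.card * t ^ 2 := by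
  induction S using Finset.induction_on with
  | empty => simp; positivity
  | insert j S hj ih =>
    rw [Finset.prod_insert hj, Finset.sum_insert hj, Finset.card_insert_of_notMem hj]
    set R := ∏ i ∈ S, (1 + a i) with hR
    set Sa := ∑ i ∈ S, a i with hSa
    have h1 : (1 + a j) * R - 1 - (a j + Sa) = (R - 1 - Sa) * (1 + a j) + a j * Sa := by ring
    have h2 : |Sa| ≤ S.card * t := by
      refine (Finset.abs_sum_le_sum_abs _ _).trans ?_
      calc _ ≤ ∑ i ∈ S, t := Finset.sum_le_sum fun i _ => ha i
        _ = _ := by simp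
    have h3 : |1 + a j| ≤ 2 := by
      have := ha j
      rw [abs_le] at this ⊢
      constructor <;> linarith [this.1, this.2]
    have h4 : (S.card : ℝ) ≤ 4 ^ S.card := by
      have : S.card < 4 ^ S.card := Nat.lt_pow_self (by norm_num)
      exact_mod_cast this.le
    rw [h1]
    refine (abs_add_le _ _).trans ?_
    rw [abs_mul, abs_mul]
    have h5 : |R - 1 - Sa| * |1 + a j| ≤ (4 ^ S.card * t ^ 2) * 2 :=
      mul_le_mul ih h3 (abs_nonneg _) (by positivity)
    have h6 : |a j| * |Sa| ≤ t * (S.card * t) := mul_le_mul (ha j) h2 (abs_nonneg _) ht0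
    have h7 : t * (S.card * t) ≤ 4 ^ S.card * t ^ 2 := by
      have : t * (S.card * t) = S.card * t ^ 2 := by ring
      rw [this]; gcongr
    rw [pow_succ]
    nlinarith [show (0:ℝ) ≤ 4 ^ S.card * t ^ 2 by positivity]

lemma det_lower (n : ℕ) : ∃ C : ℝ, 0 ≤ C ∧ ∀ (E : Matrix (Fin n) (Fin n) ℝ) (t : ℝ), 0 ≤ t → t ≤ 1 →
    (∀ i j, |E i j| ≤ t) → 1 + E.trace - C * t ^ 2 ≤ (1 + E).det := by
  refine ⟨4 ^ n + (Fintype.card (Equiv.Perm (Fin n))) * 2 ^ n, by positivity, ?_⟩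
  intro E t ht0 ht1 hE
  rw [Matrix.det_apply, ← Finset.add_sum_erase _ _ (Finset.mem_univ (1 : Equiv.Perm (Fin n)))]
  have h1 : |∏ i, (1 + E i i) - 1 - ∑ i, E i i| ≤ 4 ^ n * t ^ 2 := by
    simpa using prod_one_add_approx Finset.univ (fun i => E i i) t ht0 ht1 (fun i => hE i i)
  have h2 : ∀ σ ∈ Finset.univ.erase (1 : Equiv.Perm (Fin n)),
      -(2 ^ n * t ^ 2) ≤ Equiv.Perm.sign σ • ∏ i, (1 + E) (σ i) i := by
    intro σ hσ
    have hne : σ ≠ 1 := (Finset.mem_erase.mp hσ).1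
    obtain ⟨a, ha⟩ : ∃ a, σ a ≠ a := by
      by_contra! h
      exact hne (Equiv.ext h)
    have hab : σ (σ a) ≠ σ a := fun h => ha (σ.injective h)
    have habs : |∏ i, (1 + E) (σ i) i| ≤ 2 ^ n * t ^ 2 := by
      rw [Finset.abs_prod, ← Finset.mul_prod_erase _ _ (Finset.mem_univ a),
        ← Finset.mul_prod_erase _ _ (Finset.mem_erase.mpr ⟨ha, Finset.mem_univ (σ a)⟩)]
      have e1 : |(1 + E) (σ a) a| ≤ t := by
        simpa [Matrix.one_apply, ha] using hE (σ a) a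
      have e2 : |(1 + E) (σ (σ a)) (σ a)| ≤ t := by
        simpa [Matrix.one_apply, hab, ha] using hE (σ (σ a)) (σ a)
      have e3 : ∏ i ∈ (Finset.univ.erase a).erase (σ a), |(1 + E) (σ i) i| ≤ 2 ^ n := by
        calc _ ≤ ∏ i ∈ (Finset.univ.erase a).erase (σ a), (2 : ℝ) := by
              refine Finset.prod_le_prod (fun _ _ => abs_nonneg _) fun i _ => ?_
              rw [Matrix.add_apply]
              refine (abs_add_le _ _).trans ?_
              have := hE (σ i) i
              rw [Matrix.one_apply]
              split_ifs <;> simp <;> linarith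
          _ = 2 ^ ((Finset.univ.erase a).erase (σ a)).card := by simp
          _ ≤ 2 ^ n := by
              refine pow_le_pow_right₀ (by norm_num) ?_
              calc _ ≤ (Finset.univ : Finset (Fin n)).card := Finset.card_le_card (fun _ _ => Finset.mem_univ _)
                _ = n := by simp
      have e4 : 0 ≤ ∏ i ∈ (Finset.univ.erase a).erase (σ a), |(1 + E) (σ i) i| :=
        Finset.prod_nonneg fun _ _ => abs_nonneg _
      calc _ ≤ t * (t * 2 ^ n) := by gcongr
        _ = _ := by ring
    have h3 : |Equiv.Perm.sign σ • ∏ i, (1 + E) (σ i) i| ≤ 2 ^ n * t ^ 2 := by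
      rcases Int.units_eq_one_or (Equiv.Perm.sign σ) with h | h <;> simp [h, habs, -Matrix.add_apply]
    exact (abs_le.mp h3).1
  have h3 := Finset.sum_le_sum h2
  have h4 : -((Fintype.card (Equiv.Perm (Fin n)) : ℝ) * (2 ^ n * t ^ 2)) ≤
      ∑ σ ∈ Finset.univ.erase (1 : Equiv.Perm (Fin n)), -(2 ^ n * t ^ 2 : ℝ) := by
    rw [Finset.sum_const, nsmul_eq_mul, mul_neg]
    apply neg_le_neg
    have : ((Finset.univ.erase (1 : Equiv.Perm (Fin n))).card : ℝ) ≤ Fintype.card (Equiv.Perm (Fin n)) := by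
      exact_mod_cast Finset.card_le_card (fun _ _ => Finset.mem_univ _)
    gcongr
  have h5 : Equiv.Perm.sign (1 : Equiv.Perm (Fin n)) • ∏ i, (1 + E) ((1 : Equiv.Perm (Fin n)) i) i
      = ∏ i, (1 + E i i) := by simp
  rw [h5]
  have h6 := (abs_le.mp h1).1
  have h7 : E.trace = ∑ i, E i i := rfl
  rw [h7]
  linarith

/-- linear term of the determinant for one flag -/
def lin1 {n : ℕ} (P : (Fin n → ℤ) → (Fin n → ℝ)) (f : Flag n) (k : Fin n) : ℝ :=
  sg f (f.1 k) * (P (face f k) - ctr (face f k)) (f.1 k)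
    - nxt f k (P (face f k) - ctr (face f k))

lemma abs_lin1_le {n : ℕ} (P : (Fin n → ℤ) → (Fin n → ℝ)) (f : Flag n) (k : Fin n) (η : ℝ)
    (hη : 0 ≤ η) (hP : ∀ k i, |P (face f k) i - ctr (face f k) i| ≤ η) :
    |lin1 P f k| ≤ 2 * η := by
  unfold lin1
  have h1 := abs_nxt_le f k (P (face f k) - ctr (face f k)) η hη (fun i => hP k i)
  have h2 : |sg f (f.1 k) * (P (face f k) - ctr (face f k)) (f.1 k)| ≤ η := by
    rw [abs_mul, abs_sg, one_mul]; exact hP k _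
  refine (abs_sub _ _).trans ?_
  linarith

lemma det_flag_lower (n : ℕ) : ∃ C : ℝ, 0 ≤ C ∧ ∀ (P : (Fin n → ℤ) → (Fin n → ℝ)) (f : Flag n)
    (η : ℝ), 0 ≤ η → 2 * η ≤ 1 → (∀ k i, |P (face f k) i - ctr (face f k) i| ≤ η) →
    1 + ∑ k, lin1 P f k - C * η ^ 2 ≤ |(fmat P f).det| := by
  obtain ⟨C, hC, h⟩ := det_lower n
  refine ⟨C * 4, by positivity, ?_⟩
  intro P f η hη hη1 hP
  have hu : IsUnit (fmat ctr f).det := by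
    have := abs_det_ctr f
    rw [isUnit_iff_ne_zero]
    intro h0
    rw [h0] at this
    simp at this
  set E := (fmat P f - fmat ctr f) * (fmat ctr f)⁻¹ with hE
  have hEC : E * fmat ctr f = fmat P f - fmat ctr f := by
    rw [hE, Matrix.mul_assoc, Matrix.nonsing_inv_mul _ hu, Matrix.mul_one]
  have hrow : ∀ k, Matrix.vecMul (E k) (fmat ctr f) = P (face f k) - ctr (face f k) := by
    intro k
    ext i
    have := congrFun (congrFun hEC k) i
    simpa [Matrix.mul_apply, Matrix.vecMul, dotProduct, fmat] using this
  have hfac : fmat P f = (1 + E) * fmat ctr f := by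
    rw [Matrix.add_mul, hEC, Matrix.one_mul]; abel
  have hle : ∀ k l, |E k l| ≤ 2 * η := by
    intro k l
    refine coef_le f (E k) η hη (fun i => ?_) l
    rw [hrow]; exact hP k i
  have htr : E.trace = ∑ k, lin1 P f k := by
    refine Finset.sum_congr rfl fun k _ => ?_
    rw [Matrix.diag_apply, coef_eq f (E k) k, hrow]
    rfl
  have := h E (2 * η) (by positivity) hη1 hle
  rw [hfac, Matrix.det_mul, abs_mul, abs_det_ctr, mul_one, ← htr]
  calc _ ≤ _ := by linarith
    _ ≤ _ := this
    _ ≤ _ := le_abs_self _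

lemma sum_nxt (n : ℕ) (k : Fin n) (D : (Fin n → ℤ) → (Fin n → ℝ)) :
    ∑ f : Flag n, nxt f k (D (face f k)) = 0 := by
  by_cases hk : k.1 + 1 < n
  · set l : Fin n := ⟨k.1 + 1, hk⟩ with hl
    let φ : Flag n → Flag n := fun f => (f.1, Function.update f.2 (f.1 l) (-(f.2 (f.1 l))))
    have hφ : Function.Involutive φ := by
      intro f
      simp [φ]
    have hface : ∀ f, face (φ f) k = face f k := by
      intro f
      ext i
      simp only [face, φ]
      split_ifs with h
      · rw [Function.update_of_ne]
        rintro rfl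
        simp [hl, Fin.le_def] at h
      · rfl
    have hneg : ∀ f, nxt (φ f) k (D (face (φ f) k)) = - nxt f k (D (face f k)) := by
      intro f
      rw [hface]
      simp only [nxt, hk, dif_pos, sg, φ, ← hl]
      simp
    have h1 : ∑ f : Flag n, nxt f k (D (face f k)) = ∑ f : Flag n, nxt (φ f) k (D (face (φ f) k)) :=
      (Equiv.sum_comp (hφ.toPerm φ) (fun f => nxt f k (D (face f k)))).symm
    simp_rw [hneg] at h1
    rw [Finset.sum_neg_distrib] at h1
    linarith
  · simp [nxt, hk]

lemma sum_swap (n : ℕ) (k j : Fin n) (hj : j ≤ k) (D : (Fin n → ℤ) → (Fin n → ℝ)) :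
    ∑ f : Flag n, sg f (f.1 k) * D (face f k) (f.1 k)
      = ∑ f : Flag n, sg f (f.1 j) * D (face f k) (f.1 j) := by
  let φ : Flag n → Flag n := fun f => (f.1 * Equiv.swap j k, f.2)
  have hφ : Function.Involutive φ := by
    intro f
    simp [φ, mul_assoc]
  have hface : ∀ f, face (φ f) k = face f k := by
    intro f
    ext i
    have h : ((φ f).1.symm i ≤ k) ↔ (f.1.symm i ≤ k) := by
      have : (φ f).1.symm i = Equiv.swap j k (f.1.symm i) := by
        rw [Equiv.symm_apply_eq]; simp [φ]
      rw [this, Equiv.swap_apply_def]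
      split_ifs with h1 h2
      · simp [h1, hj]
      · simp [h2, hj]
      · rfl
    have h2 : (φ f).2 = f.2 := rfl
    simp only [face, h, h2]
  rw [← Equiv.sum_comp (hφ.toPerm φ)]
  refine Finset.sum_congr rfl fun f _ => ?_
  change sg (φ f) ((φ f).1 k) * D (face (φ f) k) ((φ f).1 k) = _
  rw [hface]
  have : (φ f).1 k = f.1 j := by simp [φ]
  rw [this]; rfl

lemma inner_face {n : ℕ} (f : Flag n) (k : Fin n) (w : Fin n → ℝ) :
    ∑ i, ctr (face f k) i * w i = ∑ j with j ≤ k, sg f (f.1 j) * w (f.1 j) := by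
  rw [← Equiv.sum_comp f.1, Finset.sum_filter]
  refine Finset.sum_congr rfl fun j _ => ?_
  rw [ctr_face]
  simp only [Equiv.symm_apply_apply]
  split_ifs <;> simp

lemma sum_lin1 (n : ℕ) (k : Fin n) (P : (Fin n → ℤ) → (Fin n → ℝ)) :
    ∑ f : Flag n, lin1 P f k
      = ∑ f : Flag n, (1 / ((k : ℝ) + 1)) * ∑ i, ctr (face f k) i * (P (face f k) - ctr (face f k)) i := by
  unfold lin1
  rw [Finset.sum_sub_distrib, sum_nxt n k (fun s => P s - ctr s), sub_zero, ← Finset.mul_sum]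
  simp_rw [inner_face]
  rw [Finset.sum_comm]
  have : ∀ j ∈ Finset.univ.filter (fun j => j ≤ k),
      ∑ f : Flag n, sg f (f.1 j) * (P (face f k) - ctr (face f k)) (f.1 j)
      = ∑ f : Flag n, sg f (f.1 k) * (P (face f k) - ctr (face f k)) (f.1 k) := by
    intro j hj
    exact (sum_swap n k j (by simpa using hj) (fun s => P s - ctr s)).symm
  rw [Finset.sum_congr rfl this, Finset.sum_const]
  have hc : (Finset.univ.filter (fun j => j ≤ k)).card = k.1 + 1 := by
    have : (Finset.univ.filter (fun j => j ≤ k)) = Finset.Iic k := by ext; simp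
    rw [this, Fin.card_Iic]
  rw [hc, nsmul_eq_mul]
  push_cast
  field_simp

lemma first_order (n : ℕ) : ∃ C : ℝ, 0 ≤ C ∧ ∀ (P : (Fin n → ℤ) → (Fin n → ℝ))
    (η : ℝ), 0 ≤ η → 2 * η ≤ 1 →
    (∀ (f : Flag n) k i, |P (face f k) i - ctr (face f k) i| ≤ η) →
    (∀ f : Flag n, 1 - C * η ≤ |(fmat P f).det|) ∧
    (Fintype.card (Flag n) : ℝ) + (∑ f : Flag n, ∑ k : Fin n,
        (1 / ((k : ℝ) + 1)) * ∑ i, ctr (face f k) i * (P (face f k) - ctr (face f k)) i) - C * η ^ 2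
      ≤ ∑ f : Flag n, |(fmat P f).det| := by
  obtain ⟨C, hC, h⟩ := det_flag_lower n
  refine ⟨Fintype.card (Flag n) * C + (2 * n + C), by positivity, ?_⟩
  intro P η hη hη1 hP
  constructor
  · intro f
    have h1 := h P f η hη hη1 (hP f)
    have h2 : |∑ k, lin1 P f k| ≤ n * (2 * η) := by
      refine (Finset.abs_sum_le_sum_abs _ _).trans ?_
      calc _ ≤ ∑ k : Fin n, 2 * η := Finset.sum_le_sum fun k _ => abs_lin1_le P f k η hη (hP f)
        _ = _ := by simp
    have h3 := (abs_le.mp h2).1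
    have h4 : C * η ^ 2 ≤ C * η := by
      have : η ^ 2 ≤ η := by nlinarith
      gcongr
    have h5 : 0 ≤ (Fintype.card (Flag n) : ℝ) * C * η := by positivity
    nlinarith
  · have h1 : ∑ f : Flag n, (1 + ∑ k, lin1 P f k - C * η ^ 2) ≤ ∑ f : Flag n, |(fmat P f).det| :=
      Finset.sum_le_sum fun f _ => h P f η hη hη1 (hP f)
    rw [Finset.sum_sub_distrib, Finset.sum_add_distrib, Finset.sum_comm] at h1
    simp_rw [sum_lin1] at h1
    rw [Finset.sum_comm] at h1
    simp only [Finset.sum_const, nsmul_eq_mul, mul_one, Finset.card_univ] at h1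
    have h5 : 0 ≤ (2 * n + C) * η ^ 2 := by positivity
    linarith

/-- deviation of `a` from its norm on the support of `s` -/
def pvec {n : ℕ} (s : Fin n → ℤ) (a : Fin n → ℝ) : Fin n → ℝ :=
  fun i => if s i = 0 then 0 else ‖a‖ - s i * a i

/-- the part of `a` off the support of `s` -/
def rvec {n : ℕ} (s : Fin n → ℤ) (a : Fin n → ℝ) : Fin n → ℝ :=
  fun i => if s i = 0 then a i else 0

/-- The coefficient of the face `s` in the piecewise linear coordinates of `a`. -/
def wt {n : ℕ} (s : Fin n → ℤ) (a : Fin n → ℝ) : ℝ := max 0 (‖a‖ - ‖pvec s a‖ - ‖rvec s a‖)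

/-- all admissible sign vectors -/
def signs (n : ℕ) : Finset (Fin n → ℤ) := Fintype.piFinset fun _ => {-1, 0, 1}

lemma face_mem {n : ℕ} (f : Flag n) (k : Fin n) : face f k ∈ signs n := by
  simp only [signs, Fintype.mem_piFinset, face]
  intro i
  split_ifs
  · rcases Int.units_eq_one_or (f.2 i) with h | h <;> simp [h]
  · simp

lemma wt_lip {n : ℕ} (s : Fin n → ℤ) (hs : s ∈ signs n) (a b : Fin n → ℝ) :
    |wt s a - wt s b| ≤ 4 * ‖a - b‖ := by
  have h0 : |‖a‖ - ‖b‖| ≤ ‖a - b‖ := abs_norm_sub_norm_le a b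
  have hi : ∀ i, |a i - b i| ≤ ‖a - b‖ := fun i => norm_le_pi_norm (a - b) i
  have h1 : |‖pvec s a‖ - ‖pvec s b‖| ≤ 2 * ‖a - b‖ := by
    refine (abs_norm_sub_norm_le _ _).trans ?_
    rw [pi_norm_le_iff_of_nonneg (by positivity)]
    intro i
    simp only [Pi.sub_apply, pvec, Real.norm_eq_abs]
    have hsi : s i = -1 ∨ s i = 0 ∨ s i = 1 := by
      have := Fintype.mem_piFinset.mp hs i
      simpa using this
    have h2 := hi i
    rw [abs_le] at h0 h2 ⊢
    rcases hsi with h | h | h <;> simp [h] <;> constructor <;> linarith [h0.1, h0.2, h2.1, h2.2]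
  have h2 : |‖rvec s a‖ - ‖rvec s b‖| ≤ ‖a - b‖ := by
    refine (abs_norm_sub_norm_le _ _).trans ?_
    rw [pi_norm_le_iff_of_nonneg (by positivity)]
    intro i
    simp only [Pi.sub_apply, rvec, Real.norm_eq_abs]
    split_ifs
    · exact hi i
    · simp
  unfold wt
  refine (abs_max_sub_max_le_max _ _ _ _).trans ?_
  rw [abs_le] at h0 h1 h2
  refine max_le (by simp) ?_
  rw [abs_le]
  constructor <;> linarith [h0.1, h0.2, h1.1, h1.2, h2.1, h2.2]

section
variable {n : ℕ} (f : Flag n) (γ : Fin n → ℝ) (hγ : ∀ k, 0 < γ k)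

lemma tail_anti (hγ : ∀ k, 0 < γ k) {l m : Fin n} (h : l < m) :
    ∑ k with m ≤ k, γ k < ∑ k with l ≤ k, γ k := by
  refine Finset.sum_lt_sum_of_subset (i := l) ?_ (by simp) (by simpa using h) (hγ l)
    (fun j _ _ => (hγ j).le)
  intro k hk
  simp only [Finset.mem_filter, Finset.mem_univ, true_and] at hk ⊢
  exact h.le.trans hk

lemma tail_pos (hγ : ∀ k, 0 < γ k) (l : Fin n) : 0 < ∑ k with l ≤ k, γ k :=
  Finset.sum_pos (fun k _ => hγ k) ⟨l, by simp⟩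

lemma abs_flag (hγ : ∀ k, 0 < γ k) (l : Fin n) :
    |Matrix.vecMul γ (fmat ctr f) (f.1 l)| = ∑ k with l ≤ k, γ k := by
  rw [vecMul_ctr, abs_mul, abs_sg, one_mul, abs_of_pos (tail_pos γ hγ l)]

lemma norm_flag (hγ : ∀ k, 0 < γ k) (z : Fin n) (hz : z.1 = 0) :
    ‖Matrix.vecMul γ (fmat ctr f)‖ = ∑ k with z ≤ k, γ k := by
  apply le_antisymm
  · rw [pi_norm_le_iff_of_nonneg (tail_pos γ hγ z).le]
    intro i
    obtain ⟨l, rfl⟩ := f.1.surjective i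
    rw [Real.norm_eq_abs, abs_flag f γ hγ]
    rcases eq_or_lt_of_le (show z ≤ l by rw [Fin.le_def, hz]; omega) with h | h
    · rw [h]
    · exact (tail_anti γ hγ h).le
  · rw [← abs_flag f γ hγ]
    exact norm_le_pi_norm (Matrix.vecMul γ (fmat ctr f)) (f.1 z)

lemma wt_face (hγ : ∀ k, 0 < γ k) (k : Fin n) :
    wt (face f k) (Matrix.vecMul γ (fmat ctr f)) = γ k := by
  set a := Matrix.vecMul γ (fmat ctr f) with ha
  let z : Fin n := ⟨0, k.pos⟩
  have hna : ‖a‖ = ∑ k with z ≤ k, γ k := norm_flag f γ hγ z rfl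
  have hval : ∀ l, a (f.1 l) = sg f (f.1 l) * ∑ k with l ≤ k, γ k := fun l => vecMul_ctr f γ l
  have hanti : ∀ {l m : Fin n}, l ≤ m → ∑ k with m ≤ k, γ k ≤ ∑ k with l ≤ k, γ k := by
    intro l m h
    rcases eq_or_lt_of_le h with h | h
    · rw [h]
    · exact (tail_anti γ hγ h).le
  have hfne : ∀ l, (face f k (f.1 l) = 0) ↔ ¬ (l ≤ k) := by
    intro l
    simp only [face, Equiv.symm_apply_apply]
    split_ifs with h <;> simp [h]
  have hfs : ∀ l, l ≤ k → (face f k (f.1 l) : ℝ) * a (f.1 l) = ∑ k with l ≤ k, γ k := by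
    intro l hl
    rw [hval]
    have : (face f k (f.1 l) : ℝ) = sg f (f.1 l) := by
      have := ctr_face f k (f.1 l)
      simpa [hl, ctr] using this
    rw [this, ← mul_assoc, sg_mul_self, one_mul]
  have hzk : ∀ l, z ≤ l := fun l => by rw [Fin.le_def]; exact Nat.zero_le _
  have hp : ‖pvec (face f k) a‖ = (∑ k with z ≤ k, γ k) - ∑ l with k ≤ l, γ l := by
    apply le_antisymm
    · rw [pi_norm_le_iff_of_nonneg (by linarith [hanti (hzk k)])]
      intro i
      obtain ⟨l, rfl⟩ := f.1.surjective i
      simp only [pvec, hfne]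
      split_ifs with h
      · rw [hfs l h, hna, Real.norm_eq_abs, abs_of_nonneg (by linarith [hanti (hzk l)])]
        linarith [hanti h]
      · simp; linarith [hanti (hzk k)]
    · have h1 := norm_le_pi_norm (pvec (face f k) a) (f.1 k)
      have h2 : pvec (face f k) a (f.1 k) = (∑ k with z ≤ k, γ k) - ∑ l with k ≤ l, γ l := by
        simp only [pvec, hfne]
        rw [if_neg (by simp), hfs k le_rfl, hna]
      rw [h2, Real.norm_eq_abs] at h1
      exact (le_abs_self _).trans h1
  have hr : ‖rvec (face f k) a‖ = ∑ l with k < l, γ l := by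
    have h0 : 0 ≤ ∑ l with k < l, γ l := Finset.sum_nonneg fun l _ => (hγ l).le
    apply le_antisymm
    · rw [pi_norm_le_iff_of_nonneg h0]
      intro i
      obtain ⟨l, rfl⟩ := f.1.surjective i
      simp only [rvec, hfne]
      split_ifs with h
      · simpa using h0
      · rw [Real.norm_eq_abs, abs_flag f γ hγ]
        refine Finset.sum_le_sum_of_subset_of_nonneg ?_ (fun j _ _ => (hγ j).le)
        intro j hj
        simp only [Finset.mem_filter, Finset.mem_univ, true_and] at hj ⊢
        exact lt_of_lt_of_le (not_le.mp h) hj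
    · rw [tail_lt_eq f γ k]
      unfold nxt
      split_ifs with h
      · set l : Fin n := ⟨k.1 + 1, h⟩ with hl
        have hkl : ¬ (l ≤ k) := by simp [hl, Fin.le_def]
        have h1 := norm_le_pi_norm (rvec (face f k) a) (f.1 l)
        have h2 : rvec (face f k) a (f.1 l) = a (f.1 l) := by
          simp only [rvec, hfne]
          rw [if_pos hkl]
        rw [h2, Real.norm_eq_abs] at h1
        refine le_trans ?_ h1
        refine (le_abs_self _).trans ?_
        rw [abs_mul, abs_sg, one_mul]
      · positivity
  have hsplit : ∑ l with k ≤ l, γ l = γ k + ∑ l with k < l, γ l := by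
    rw [tail_eq f γ k, tail_lt_eq f γ k]
    linarith [coef_eq f γ k]
  unfold wt
  rw [hp, hr, hna, hsplit]
  rw [max_eq_right] <;> linarith [hγ k]

lemma wt_not_face (hγ : ∀ k, 0 < γ k) (hn : 0 < n) (s : Fin n → ℤ) (hs : s ∈ signs n)
    (hsf : ∀ k, s ≠ face f k) :
    wt s (Matrix.vecMul γ (fmat ctr f)) = 0 := by
  set a := Matrix.vecMul γ (fmat ctr f) with ha
  let z : Fin n := ⟨0, hn⟩
  have hval : ∀ l, a (f.1 l) = sg f (f.1 l) * ∑ k with l ≤ k, γ k := fun l => vecMul_ctr f γ l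
  unfold wt
  apply max_eq_left
  by_contra! hlt
  by_cases hs0 : s = 0
  · have : rvec s a = a := by ext i; simp [rvec, hs0]
    rw [this] at hlt
    linarith [norm_nonneg (pvec s a)]
  have hp : ∀ l, s (f.1 l) ≠ 0 → ‖a‖ - s (f.1 l) * a (f.1 l) ≤ ‖pvec s a‖ := by
    intro l hl
    have h1 := norm_le_pi_norm (pvec s a) (f.1 l)
    simp only [pvec, if_neg hl, Real.norm_eq_abs] at h1
    exact (le_abs_self _).trans h1
  have hr : ∀ l, s (f.1 l) = 0 → ∑ k with l ≤ k, γ k ≤ ‖rvec s a‖ := by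
    intro l hl
    have h1 := norm_le_pi_norm (rvec s a) (f.1 l)
    simp only [rvec, if_pos hl, Real.norm_eq_abs] at h1
    rwa [abs_flag f γ hγ] at h1
  have hsgn : ∀ l, s (f.1 l) ≠ 0 → s (f.1 l) = (f.2 (f.1 l) : ℤ) := by
    intro l hl
    have hsi : s (f.1 l) = -1 ∨ s (f.1 l) = 0 ∨ s (f.1 l) = 1 := by
      have := Fintype.mem_piFinset.mp hs (f.1 l)
      simpa using this
    have h1 := hp l hl
    rw [hval] at h1
    have h2 := tail_pos γ hγ l
    have h3 := norm_nonneg (rvec s a)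
    simp only [sg] at h1
    rcases hsi with h | h | h
    · rcases Int.units_eq_one_or (f.2 (f.1 l)) with h' | h'
      · rw [h, h'] at h1; push_cast at h1; linarith
      · rw [h, h']; rfl
    · exact absurd h hl
    · rcases Int.units_eq_one_or (f.2 (f.1 l)) with h' | h'
      · rw [h, h']; rfl
      · rw [h, h'] at h1; push_cast at h1; linarith
  have hlow : ∀ l m, s (f.1 l) ≠ 0 → s (f.1 m) = 0 → l < m := by
    intro l m hl hm
    have h1 := hp l hl
    have h2 := hr m hm
    rw [hval, hsgn l hl] at h1
    change ‖a‖ - sg f (f.1 l) * _ ≤ _ at h1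
    rw [← mul_assoc, sg_mul_self, one_mul] at h1
    by_contra! hml
    rcases eq_or_lt_of_le hml with h | h
    · rw [h] at hm; exact hl hm
    · linarith [tail_anti γ hγ h]
  obtain ⟨i0, hi0⟩ : ∃ i, s i ≠ 0 := by
    by_contra! h
    exact hs0 (funext h)
  obtain ⟨l0, rfl⟩ := f.1.surjective i0
  obtain ⟨k, hk, hkmax⟩ := Finset.exists_max_image (Finset.univ.filter fun l => s (f.1 l) ≠ 0) id
    ⟨l0, by simpa using hi0⟩
  simp only [Finset.mem_filter, Finset.mem_univ, true_and, id] at hk hkmax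
  apply hsf k
  ext i
  obtain ⟨l, rfl⟩ := f.1.surjective i
  simp only [face, Equiv.symm_apply_apply]
  split_ifs with h
  · apply hsgn
    intro h0
    exact absurd (hlow k l hk h0) (not_lt.mpr h)
  · by_contra h0
    exact h (hkmax l h0)

lemma face_inj {k l : Fin n} (h : face f k = face f l) : k = l := by
  by_contra hne
  wlog hkl : k < l generalizing k l
  · exact this h.symm (Ne.symm hne) (lt_of_le_of_ne (not_lt.mp hkl) (Ne.symm hne))
  have := congrFun h (f.1 l)
  simp [face, not_le.mpr hkl] at this
  exact (Units.ne_zero (f.2 (f.1 l))) this.symm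

lemma sum_wt (hγ : ∀ k, 0 < γ k) (hn : 0 < n) (D : (Fin n → ℤ) → ℝ) :
    ∑ k, γ k * D (face f k) = ∑ s ∈ signs n, wt s (Matrix.vecMul γ (fmat ctr f)) * D s := by
  have h1 : ∑ s ∈ Finset.univ.image (face f), wt s (Matrix.vecMul γ (fmat ctr f)) * D s
      = ∑ s ∈ signs n, wt s (Matrix.vecMul γ (fmat ctr f)) * D s := by
    refine Finset.sum_subset ?_ ?_
    · intro s hs
      obtain ⟨k, -, rfl⟩ := Finset.mem_image.mp hs
      exact face_mem f k
    · intro s hs hs'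
      rw [wt_not_face f γ hγ hn s hs, zero_mul]
      rintro k rfl
      exact hs' (Finset.mem_image_of_mem _ (Finset.mem_univ _))
  rw [← h1, Finset.sum_image (fun _ _ _ _ h => face_inj f h)]
  refine Finset.sum_congr rfl fun k _ => ?_
  rw [wt_face f γ hγ]

end

lemma flag_eq {n : ℕ} (f g : Flag n) (γ θ : Fin n → ℝ) (hγ : ∀ k, 0 < γ k) (hθ : ∀ k, 0 < θ k)
    (h : Matrix.vecMul γ (fmat ctr f) = Matrix.vecMul θ (fmat ctr g)) : f = g := by
  set a := Matrix.vecMul γ (fmat ctr f) with ha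
  have hf : ∀ l m, l < m → |a (f.1 m)| < |a (f.1 l)| := by
    intro l m hlm
    rw [ha, abs_flag f γ hγ, abs_flag f γ hγ]
    exact tail_anti γ hγ hlm
  have hg : ∀ l m, l < m → |a (g.1 m)| < |a (g.1 l)| := by
    intro l m hlm
    rw [h, abs_flag g θ hθ, abs_flag g θ hθ]
    exact tail_anti θ hθ hlm
  have hfmono : ∀ l m, |a (f.1 m)| < |a (f.1 l)| → l < m := by
    intro l m h1
    by_contra! h2
    rcases eq_or_lt_of_le h2 with h3 | h3
    · rw [h3] at h1; exact lt_irrefl _ h1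
    · exact lt_asymm h1 (hf _ _ h3)
  have hmono : StrictMono (g.1.trans f.1.symm) := by
    intro l m hlm
    apply hfmono
    simpa using hg l m hlm
  have hid : ∀ l, (g.1.trans f.1.symm) l = l := by
    have : (g.1.trans f.1.symm : Fin n → Fin n) = id := by
      have h2 := hmono.range_inj (g := (id : Fin n → Fin n)) strictMono_id
      exact h2.mp (by rw [(g.1.trans f.1.symm).surjective.range_eq, Set.range_id])
    intro l; exact congrFun this l
  have hσ : f.1 = g.1 := by
    ext l
    have := hid l
    simp only [Equiv.trans_apply] at this
    rw [Equiv.symm_apply_eq] at this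
    rw [this]
  refine Prod.ext hσ ?_
  funext i
  obtain ⟨l, rfl⟩ := f.1.surjective i
  have h1 : a (f.1 l) = sg f (f.1 l) * ∑ k with l ≤ k, γ k := vecMul_ctr f γ l
  have h2 : a (f.1 l) = sg g (f.1 l) * ∑ k with l ≤ k, θ k := by
    rw [hσ, h]; exact vecMul_ctr g θ l
  have p1 := tail_pos γ hγ l
  have p2 := tail_pos θ hθ l
  rw [h1] at h2
  unfold sg at h2
  rcases Int.units_eq_one_or (f.2 (f.1 l)) with h' | h' <;>
  rcases Int.units_eq_one_or (g.2 (f.1 l)) with hq | hq <;>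
    rw [h', hq] at h2 ⊢ <;> push_cast at h2 <;> linarith

lemma cone_disjoint {n : ℕ} (hn : 0 < n) (P : (Fin n → ℤ) → (Fin n → ℝ)) (η : ℝ) (hη : 0 ≤ η)
    (hη' : (signs n).card * (4 * η) < 1)
    (hP : ∀ (f : Flag n) k i, |P (face f k) i - ctr (face f k) i| ≤ η)
    (f g : Flag n) (γ θ : Fin n → ℝ) (hγ : ∀ k, 0 < γ k) (hθ : ∀ k, 0 < θ k)
    (h : Matrix.vecMul γ (fmat P f) = Matrix.vecMul θ (fmat P g)) : f = g := by
  classical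
  apply flag_eq f g γ θ hγ hθ
  set a := Matrix.vecMul γ (fmat ctr f) with ha
  set b := Matrix.vecMul θ (fmat ctr g) with hb
  -- truncated deviation
  let D : Fin n → (Fin n → ℤ) → ℝ := fun i s => if |P s i - ctr s i| ≤ η then P s i - ctr s i else 0
  have hDle : ∀ i s, |D i s| ≤ η := by
    intro i s
    simp only [D]
    split_ifs with h
    · exact h
    · simpa using hη
  have hDf : ∀ (f : Flag n) k i, D i (face f k) = P (face f k) i - ctr (face f k) i := by
    intro f k i
    simp only [D]
    rw [if_pos (hP f k i)]
  have hsum : ∀ (f : Flag n) (γ : Fin n → ℝ), (∀ k, 0 < γ k) → ∀ i,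
      Matrix.vecMul γ (fmat P f) i = Matrix.vecMul γ (fmat ctr f) i
        + ∑ s ∈ signs n, wt s (Matrix.vecMul γ (fmat ctr f)) * D i s := by
    intro f γ hγ i
    rw [← sum_wt f γ hγ hn]
    simp only [hDf, Matrix.vecMul, dotProduct, fmat, Matrix.of_apply, ← Finset.sum_add_distrib]
    refine Finset.sum_congr rfl fun k _ => by ring
  have hle : ‖a - b‖ ≤ (signs n).card * (4 * η) * ‖a - b‖ := by
    rw [pi_norm_le_iff_of_nonneg (by positivity)]
    intro i
    have h1 := hsum f γ hγ i
    have h2 := hsum g θ hθ i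
    rw [h, h2] at h1
    have h3 : (a - b) i = ∑ s ∈ signs n, (wt s b - wt s a) * D i s := by
      simp only [sub_mul, Finset.sum_sub_distrib, Pi.sub_apply]
      linarith
    rw [h3, Real.norm_eq_abs]
    refine (Finset.abs_sum_le_sum_abs _ _).trans ?_
    calc _ ≤ ∑ s ∈ signs n, (4 * ‖a - b‖) * η := by
          refine Finset.sum_le_sum fun s hs => ?_
          rw [abs_mul]
          refine mul_le_mul ?_ (hDle i s) (abs_nonneg _) (by positivity)
          rw [abs_sub_comm]
          exact wt_lip s hs a b
      _ = _ := by rw [Finset.sum_const, nsmul_eq_mul]; ring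
  have h0 : ‖a - b‖ = 0 := by
    by_contra hne
    have : 0 < ‖a - b‖ := lt_of_le_of_ne (norm_nonneg _) (Ne.symm hne)
    nlinarith
  exact sub_eq_zero.mp (norm_eq_zero.mp h0)

/-- the open standard corner simplex -/
def spx (n : ℕ) : Set (Fin n → ℝ) := {γ | (∀ k, 0 < γ k) ∧ ∑ k, γ k < 1}

lemma spx_open (n : ℕ) : IsOpen (spx n) := by
  have : spx n = (⋂ k, {γ : Fin n → ℝ | 0 < γ k}) ∩ {γ | ∑ k, γ k < 1} := by
    ext γ; simp [spx]
  rw [this]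
  refine IsOpen.inter (isOpen_iInter_of_finite fun k => isOpen_lt continuous_const (continuous_apply k))
    (isOpen_lt (by fun_prop) continuous_const)

lemma vol_spx (n : ℕ) (hn : 0 < n) : ENNReal.ofReal (1 / n.factorial) ≤ volume (spx n) := by
  have : Nonempty (Fin n) := ⟨⟨0, hn⟩⟩
  have hball := MeasureTheory.volume_sum_rpow_lt_one (Fin n) (p := 1) le_rfl
  have hG : (2 * Real.Gamma (1 / 1 + 1)) ^ Fintype.card (Fin n) /
      Real.Gamma ((Fintype.card (Fin n) : ℝ) / 1 + 1) = 2 ^ n * (1 / n.factorial) := by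
    rw [Fintype.card_fin, div_one, div_one, Real.Gamma_nat_eq_factorial, Real.Gamma_add_one one_ne_zero,
      Real.Gamma_one]
    ring
  rw [hG] at hball
  simp only [Real.rpow_one] at hball
  let L : (Fin n → ℤˣ) → (Fin n → ℝ) →ₗ[ℝ] (Fin n → ℝ) := fun σ =>
    Matrix.toLin' (Matrix.diagonal fun i => ((σ i : ℤ) : ℝ))
  have hL : ∀ σ x i, L σ x i = ((σ i : ℤ) : ℝ) * x i := by
    intro σ x i
    simp [L, Matrix.mulVec_diagonal]
  have hdet : ∀ σ, |LinearMap.det (L σ)| = 1 := by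
    intro σ
    simp only [L, LinearMap.det_toLin', Matrix.det_diagonal, Finset.abs_prod]
    refine Finset.prod_eq_one fun i _ => ?_
    rcases Int.units_eq_one_or (σ i) with h | h <;> simp [h]
  have hvol : ∀ σ, volume (L σ ⁻¹' spx n) = volume (spx n) := by
    intro σ
    have h0 : LinearMap.det (L σ) ≠ 0 := by
      intro h; have := hdet σ; rw [h] at this; simp at this
    rw [Measure.addHaar_preimage_linearMap _ h0, abs_inv, hdet]
    simp
  have hcov : {x : Fin n → ℝ | ∑ i, |x i| < 1} ⊆
      (⋃ σ, L σ ⁻¹' spx n) ∪ ⋃ i, {x : Fin n → ℝ | x i = 0} := by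
    intro x hx
    by_cases h : ∃ i, x i = 0
    · right
      simpa using h
    · left
      push Not at h
      rw [Set.mem_iUnion]
      have hs : ∀ i, ∃ u : ℤˣ, ((u : ℤ) : ℝ) * x i = |x i| := by
        intro i
        rcases le_total 0 (x i) with h | h
        · exact ⟨1, by simp [abs_of_nonneg h]⟩
        · exact ⟨-1, by simp [abs_of_nonpos h]⟩
      choose u hu using hs
      refine ⟨u, ?_⟩
      simp only [Set.mem_preimage, spx, Set.mem_ofPred_eq, hL, hu]
      exact ⟨fun k => abs_pos.mpr (h k), hx⟩
  have hnull : volume (⋃ i, {x : Fin n → ℝ | x i = 0}) = 0 := by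
    rw [measure_iUnion_null_iff]
    intro i
    exact Measure.pi_hyperplane (fun _ : Fin n => (volume : Measure ℝ)) i 0
  have h1 : ENNReal.ofReal (2 ^ n * (1 / n.factorial)) ≤ 2 ^ n * volume (spx n) := by
    rw [← hball]
    refine (measure_mono hcov).trans ((measure_union_le _ _).trans ?_)
    rw [hnull, add_zero]
    refine (measure_iUnion_le _).trans ?_
    rw [tsum_fintype]
    simp only [hvol, Finset.sum_const, nsmul_eq_mul, Finset.card_univ]
    apply le_of_eq
    congr 1
    simp
  rw [ENNReal.ofReal_mul (by positivity), ENNReal.ofReal_pow (by norm_num)] at h1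
  rw [ENNReal.ofReal_ofNat] at h1
  exact (ENNReal.mul_le_mul_iff_right (by simp) (by simp)).mp h1

lemma conv0 {ι E : Type*} [Fintype ι] [AddCommGroup E] [Module ℝ E] {K : Set E} (hK : Convex ℝ K)
    (h0 : (0 : E) ∈ K) (w : ι → ℝ) (z : ι → E) (hw : ∀ i, 0 ≤ w i) (hw1 : ∑ i, w i ≤ 1)
    (hz : ∀ i, z i ∈ K) : ∑ i, w i • z i ∈ K := by
  have := hK.sum_mem (t := Finset.univ) (w := fun o : Option ι => o.elim (1 - ∑ i, w i) w)
    (z := fun o => o.elim 0 z) ?_ ?_ ?_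
  · simpa [Fintype.sum_option] using this
  · rintro (_ | i) _
    · simpa using hw1
    · exact hw i
  · simp [Fintype.sum_option]
  · rintro (_ | i) _
    · exact h0
    · exact hz i

/-- the extra simplex seen from a point `b` beyond the face `∑ γ = 1` -/
lemma extra_spx {n : ℕ} (b : Fin n → ℝ) (hb : ∀ k, 0 ≤ b k) (hb1 : 1 ≤ ∑ k, b k) :
    ∃ D : Set (Fin n → ℝ), MeasurableSet D ∧
      volume D = ENNReal.ofReal (∑ k, b k - 1) * volume (spx n) ∧
      ∀ γ ∈ D, (1 ≤ ∑ k, γ k) ∧ (∀ k, 0 < γ k) ∧ ∃ μ ∈ spx n, γ = (1 - ∑ k, μ k) • b + μ := by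
  rcases eq_or_lt_of_le hb1 with h1 | h1
  · refine ⟨∅, MeasurableSet.empty, ?_, by simp⟩
    rw [← h1]; simp
  set S := ∑ k, b k with hS
  have hS0 : S - 1 ≠ 0 := by linarith
  set c := (S - 1)⁻¹ with hc
  have hc1 : c * (S - 1) = 1 := inv_mul_cancel₀ hS0
  let M : Matrix (Fin n) (Fin n) ℝ :=
    1 + Matrix.replicateCol Unit (fun k => - (c * b k)) * Matrix.replicateRow Unit (fun _ => (1 : ℝ))
  let L : (Fin n → ℝ) →ₗ[ℝ] (Fin n → ℝ) := Matrix.toLin' M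
  have hL : ∀ γ i, L γ i = γ i - c * b i * ∑ k, γ k := by
    intro γ i
    simp only [L, M, Matrix.toLin'_apply, Matrix.add_mulVec, Matrix.one_mulVec, Pi.add_apply]
    have : ((Matrix.replicateCol Unit (fun k => - (c * b k)) *
        Matrix.replicateRow Unit (fun _ : Fin n => (1 : ℝ))).mulVec γ) i
        = ∑ k, (-(c * b i)) * γ k := by
      simp only [Matrix.mulVec, dotProduct, Matrix.mul_apply]
      simp
    rw [this, ← Finset.mul_sum]
    ring
  have hdet : LinearMap.det L = - c := by
    simp only [L, M, LinearMap.det_toLin']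
    rw [Matrix.det_one_add_replicateCol_mul_replicateRow]
    simp only [dotProduct, Finset.sum_neg_distrib, one_mul, ← Finset.mul_sum]
    rw [← hS]
    linarith
  have hcpos : 0 < c := inv_pos.mpr (by linarith)
  refine ⟨L ⁻¹' ((fun x => x + c • b) ⁻¹' spx n), ?_, ?_, ?_⟩
  · have : Continuous L := L.continuous_of_finiteDimensional
    exact ((spx_open n).preimage (by fun_prop)).preimage this |>.measurableSet
  · rw [Measure.addHaar_preimage_linearMap _ (by rw [hdet]; exact neg_ne_zero.mpr hcpos.ne'), hdet,
      measure_preimage_add_right]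
    rw [inv_neg, abs_neg, hc, inv_inv, abs_of_pos (by linarith)]
  · intro γ hγ
    set μ := L γ + c • b with hμ
    have hμm : μ ∈ spx n := hγ
    have hμi : ∀ i, μ i = γ i - c * b i * (∑ k, γ k - 1) := by
      intro i; simp only [hμ, Pi.add_apply, hL, Pi.smul_apply, smul_eq_mul]; ring
    have hsum : ∑ k, μ k = ∑ k, γ k - c * S * (∑ k, γ k - 1) := by
      simp only [hμi, Finset.sum_sub_distrib, ← Finset.sum_mul, ← Finset.mul_sum, ← hS]
    have h1m : 1 - ∑ k, μ k = c * (∑ k, γ k - 1) := by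
      rw [hsum]
      linear_combination (∑ k, γ k - 1) * hc1
    have hlt : ∑ k, μ k < 1 := hμm.2
    have hpos : 0 < ∑ k, γ k - 1 := by
      have : 0 < c * (∑ k, γ k - 1) := by rw [← h1m]; linarith
      exact (pos_iff_pos_of_mul_pos this).mp hcpos
    have hγi : ∀ i, γ i = (1 - ∑ k, μ k) * b i + μ i := by
      intro i; rw [h1m, hμi]; ring
    refine ⟨by linarith, ?_, μ, hμm, ?_⟩
    · intro k
      rw [hγi]
      have := hμm.1 k
      have h2 := mul_nonneg (by linarith : 0 ≤ 1 - ∑ k, μ k) (hb k)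
      linarith
    · ext i
      simp only [Pi.add_apply, Pi.smul_apply, smul_eq_mul]
      exact hγi i

lemma vol_main {n : ℕ} (hn : 0 < n) (K : Set (Fin n → ℝ)) (hK : Convex ℝ K) (h0 : 0 ∈ K)
    (P : (Fin n → ℤ) → (Fin n → ℝ)) (η : ℝ) (hη : 0 ≤ η)
    (hη1 : (signs n).card * (4 * η) < 1) (hη2 : 4 * n * η ≤ 1)
    (hP : ∀ (f : Flag n) k i, |P (face f k) i - ctr (face f k) i| ≤ η)
    (lam : Fin n → ℝ) (hlam : ∀ k, 0 < lam k)
    (hmem : ∀ f k, lam k • P (face f k) ∈ K)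
    (f0 : Flag n) (b : Fin n → ℝ) (hb : ∀ k, 0 ≤ b k) (hb1 : 1 ≤ ∑ k, b k)
    (hbK : Matrix.vecMul (fun k => b k * lam k) (fmat P f0) ∈ K) :
    ENNReal.ofReal ((∏ k, lam k) / n.factorial *
      (∑ f, |(fmat P f).det| + (∑ k, b k - 1) * |(fmat P f0).det|)) ≤ volume K := by
  classical
  obtain ⟨D, hDm, hDv, hD⟩ := extra_spx b hb hb1
  let M : Flag n → Matrix (Fin n) (Fin n) ℝ := fun f => Matrix.diagonal lam * fmat P f
  have hMdet : ∀ f, (M f).det = (∏ k, lam k) * (fmat P f).det := by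
    intro f; simp [M, Matrix.det_mul, Matrix.det_diagonal]
  have hlamP : 0 < ∏ k, lam k := Finset.prod_pos fun k _ => hlam k
  have hMne : ∀ f, (M f).det ≠ 0 := by
    intro f; rw [hMdet]
    exact mul_ne_zero hlamP.ne' (fmat_det_ne P f η hη hη2 (hP f))
  have hMv : ∀ f γ, Matrix.vecMul γ (M f) = Matrix.vecMul (fun k => γ k * lam k) (fmat P f) := by
    intro f γ
    simp only [M, ← Matrix.vecMul_vecMul]
    congr 1
    ext k
    simp [Matrix.vecMul_diagonal]
  have hMs : ∀ f γ, Matrix.vecMul γ (M f) = ∑ k, γ k • (lam k • P (face f k)) := by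
    intro f γ
    rw [hMv]
    ext i
    simp [Matrix.vecMul, dotProduct, fmat, mul_assoc]
  let G : Flag n → Set (Fin n → ℝ) := fun f => if f = f0 then spx n ∪ D else spx n
  have hspx : ∀ f, ∀ γ ∈ spx n, Matrix.vecMul γ (M f) ∈ K := by
    intro f γ hγ
    rw [hMs]
    exact conv0 hK h0 γ _ (fun k => (hγ.1 k).le) hγ.2.le (hmem f)
  have hGpos : ∀ f, ∀ γ ∈ G f, ∀ k, 0 < γ k := by
    intro f γ hγ
    simp only [G] at hγ
    split_ifs at hγ
    · rcases hγ with h | h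
      · exact h.1
      · exact (hD γ h).2.1
    · exact hγ.1
  have hGK : ∀ f, ∀ γ ∈ G f, Matrix.vecMul γ (M f) ∈ K := by
    intro f γ hγ
    simp only [G] at hγ
    split_ifs at hγ with hf
    · rcases hγ with h | h
      · exact hspx f γ h
      · obtain ⟨-, -, μ, hμ, rfl⟩ := hD γ h
        rw [Matrix.add_vecMul, Matrix.smul_vecMul, hMs f μ, hMv, hf]
        have := conv0 hK h0 (fun o : Option (Fin n) => o.elim (1 - ∑ k, μ k) μ)
          (fun o => o.elim (Matrix.vecMul (fun k => b k * lam k) (fmat P f0))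
            (fun k => lam k • P (face f0 k))) ?_ ?_ ?_
        · simpa [Fintype.sum_option] using this
        · rintro (_ | i)
          · simpa using hμ.2.le
          · exact (hμ.1 i).le
        · simp [Fintype.sum_option]
        · rintro (_ | i)
          · exact hbK
          · exact hmem f0 i
    · exact hspx f γ hγ
  have hGm : ∀ f, MeasurableSet (G f) := by
    intro f
    simp only [G]
    split_ifs
    · exact (spx_open n).measurableSet.union hDm
    · exact (spx_open n).measurableSet
  let A : Flag n → (Fin n → ℝ) →ₗ[ℝ] (Fin n → ℝ) := fun f => Matrix.toLin' ((M f)⁻¹).transpose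
  have hA : ∀ f x, A f x = Matrix.vecMul x (M f)⁻¹ := by
    intro f x
    simp [A, Matrix.mulVec_transpose]
  have hAM : ∀ f x, Matrix.vecMul (A f x) (M f) = x := by
    intro f x
    rw [hA, Matrix.vecMul_vecMul, Matrix.nonsing_inv_mul _ (isUnit_iff_ne_zero.mpr (hMne f)), Matrix.vecMul_one]
  have hAdet : ∀ f, LinearMap.det (A f) = ((M f).det)⁻¹ := by
    intro f
    simp only [A, LinearMap.det_toLin', Matrix.det_transpose, Matrix.det_nonsing_inv, Ring.inverse_eq_inv']
  have hvol : ∀ f, volume (A f ⁻¹' G f) = ENNReal.ofReal |(M f).det| * volume (G f) := by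
    intro f
    rw [Measure.addHaar_preimage_linearMap _ (by rw [hAdet]; exact inv_ne_zero (hMne f)), hAdet, inv_inv]
  have hAmeas : ∀ f, MeasurableSet (A f ⁻¹' G f) := fun f =>
    (A f).continuous_of_finiteDimensional.measurable (hGm f)
  have hdisj : Pairwise (Function.onFun Disjoint fun f => A f ⁻¹' G f) := by
    intro f g hfg
    rw [Function.onFun, Set.disjoint_left]
    intro x hxf hxg
    apply hfg
    refine cone_disjoint hn P η hη hη1 hP f g (fun k => A f x k * lam k) (fun k => A g x k * lam k)
      (fun k => mul_pos (hGpos f _ hxf k) (hlam k)) (fun k => mul_pos (hGpos g _ hxg k) (hlam k)) ?_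
    rw [← hMv, ← hMv, hAM, hAM]
  have hsub : (⋃ f, A f ⁻¹' G f) ⊆ K := by
    intro x hx
    obtain ⟨f, hf⟩ := Set.mem_iUnion.mp hx
    have := hGK f _ hf
    rwa [hAM] at this
  refine le_trans ?_ (measure_mono hsub)
  rw [measure_iUnion hdisj hAmeas, tsum_fintype]
  have hGv : ∀ f, volume (G f) = ENNReal.ofReal (1 + if f = f0 then (∑ k, b k - 1) else 0) * volume (spx n) := by
    intro f
    simp only [G]
    split_ifs
    · rw [measure_union ?_ hDm, hDv, ENNReal.ofReal_add zero_le_one (by linarith), add_mul, ENNReal.ofReal_one, one_mul]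
      rw [Set.disjoint_left]
      intro γ h1 h2
      linarith [h1.2, (hD γ h2).1]
    · simp
  have hterm : ∀ f, ENNReal.ofReal (|(M f).det| * (1 + if f = f0 then (∑ k, b k - 1) else 0) * (1 / n.factorial))
      ≤ volume (A f ⁻¹' G f) := by
    intro f
    have hnn : 0 ≤ (1 + if f = f0 then (∑ k, b k - 1) else 0) := by
      split_ifs <;> linarith
    rw [hvol, hGv, ENNReal.ofReal_mul (by positivity), ENNReal.ofReal_mul (by positivity), mul_assoc]
    gcongr
    exact vol_spx n hn
  refine le_trans ?_ (Finset.sum_le_sum fun f _ => hterm f)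
  rw [← ENNReal.ofReal_sum_of_nonneg]
  · apply ENNReal.ofReal_le_ofReal
    apply le_of_eq
    rw [← Finset.sum_mul]
    simp only [hMdet, abs_mul, abs_of_pos hlamP, mul_add, mul_one, Finset.sum_add_distrib, mul_ite, mul_zero,
      Finset.sum_ite_eq', Finset.mem_univ, if_true, ← Finset.mul_sum]
    ring
  · intro f _
    have hnn : 0 ≤ (1 + if f = f0 then (∑ k, b k - 1) else 0) := by
      split_ifs <;> linarith
    positivity

/-- polar body in coordinates -/
def pol {n : ℕ} (K : Set (Fin n → ℝ)) : Set (Fin n → ℝ) := {y | ∀ x ∈ K, x ⬝ᵥ y ≤ 1}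

lemma lin_dot {n : ℕ} (f : (Fin n → ℝ) →ₗ[ℝ] ℝ) (x : Fin n → ℝ) :
    f x = x ⬝ᵥ (fun i => f (Pi.single i 1)) := by
  conv_lhs => rw [pi_eq_sum_univ' x]
  rw [map_sum]
  simp only [map_smul, smul_eq_mul, dotProduct]

lemma pol_convex {n : ℕ} (K : Set (Fin n → ℝ)) : Convex ℝ (pol K) := by
  intro y hy z hz a b ha hb hab x hx
  rw [dotProduct_add, dotProduct_smul, dotProduct_smul, smul_eq_mul, smul_eq_mul]
  nlinarith [hy x hx, hz x hx]

lemma pol_zero {n : ℕ} (K : Set (Fin n → ℝ)) : (0 : Fin n → ℝ) ∈ pol K := by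
  intro x _; simp

lemma pol_closed {n : ℕ} (K : Set (Fin n → ℝ)) : IsClosed (pol K) := by
  have : pol K = ⋂ x ∈ K, {y | x ⬝ᵥ y ≤ 1} := by ext y; simp [pol]
  rw [this]
  refine isClosed_biInter fun x _ => isClosed_le ?_ continuous_const
  unfold dotProduct; fun_prop

lemma sep {n : ℕ} (K : Set (Fin n → ℝ)) (hK : Convex ℝ K) (hc : IsClosed K) (h0 : 0 ∈ K)
    (z : Fin n → ℝ) (hz : z ∉ K) : ∃ y ∈ pol K, 1 < z ⬝ᵥ y := by
  obtain ⟨f, u, h1, h2⟩ := geometric_hahn_banach_closed_point hK hc hz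
  have hu : 0 < u := by simpa using h1 0 h0
  have hf : ∀ x, x ⬝ᵥ (fun i => u⁻¹ * f (Pi.single i 1)) = u⁻¹ * f x := by
    intro x
    have := lin_dot (f : (Fin n → ℝ) →ₗ[ℝ] ℝ) x
    simp only [ContinuousLinearMap.coe_coe] at this
    rw [this]
    simp only [dotProduct, Finset.mul_sum]
    refine Finset.sum_congr rfl fun i _ => by ring
  refine ⟨fun i => u⁻¹ * f (Pi.single i 1), ?_, ?_⟩
  · intro x hx
    rw [hf, inv_mul_le_iff₀ hu]
    linarith [h1 x hx]
  · rw [hf, lt_inv_mul_iff₀ hu]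
    linarith

lemma pol_l1 {n : ℕ} (K : Set (Fin n → ℝ)) (d : ℝ) (hd1 : d ≤ 1)
    (hbox : ∀ x : Fin n → ℝ, (∀ i, |x i| ≤ 1 - d) → x ∈ K) (y : Fin n → ℝ) (hy : y ∈ pol K) :
    (1 - d) * ∑ i, |y i| ≤ 1 := by
  have := hy (fun i => (1 - d) * SignType.sign (y i)) (hbox _ ?_)
  · refine le_trans (le_of_eq ?_) this
    rw [Finset.mul_sum, dotProduct]
    refine Finset.sum_congr rfl fun i _ => ?_
    rw [mul_assoc, sign_mul_self]
  · intro i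
    rw [abs_mul, abs_of_nonneg (by linarith : 0 ≤ 1 - d)]
    have : |((SignType.sign (y i) : SignType) : ℝ)| ≤ 1 := by
      rcases lt_trichotomy (y i) 0 with h | h | h <;> simp [h]
    nlinarith

lemma ext_fun {n : ℕ} (K : Set (Fin n → ℝ)) (hK : Convex ℝ K) (hnh : K ∈ nhds (0 : Fin n → ℝ))
    (E : Submodule ℝ (Fin n → ℝ)) (l : Fin n → ℝ) (hl : ∀ w ∈ K, w ∈ E → w ⬝ᵥ l ≤ 1) :
    ∃ y ∈ pol K, ∀ w ∈ E, w ⬝ᵥ y = w ⬝ᵥ l := by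
  have habs : Absorbent ℝ K := absorbent_nhds_zero hnh
  let f0 : (Fin n → ℝ) →ₗ[ℝ] ℝ :=
    { toFun := fun w => w ⬝ᵥ l
      map_add' := fun a b => add_dotProduct a b l
      map_smul' := fun a b => by simp [smul_dotProduct] }
  have hf : ∀ w, w ∈ E → w ⬝ᵥ l ≤ gauge K w := by
    intro w hw
    refine le_of_forall_gt fun r hr => ?_
    obtain ⟨b, hb0, hbr, x, hx, rfl⟩ := exists_lt_of_gauge_lt habs hr
    have hxE : x ∈ E := by
      have := E.smul_mem b⁻¹ hw
      rwa [smul_smul, inv_mul_cancel₀ hb0.ne', one_smul] at this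
    change (b • x) ⬝ᵥ l < r
    rw [smul_dotProduct, smul_eq_mul]
    nlinarith [hl x hx hxE]
  obtain ⟨g, hg1, hg2⟩ := exists_extension_of_le_sublinear
    (⟨E, f0.comp E.subtype⟩ : (Fin n → ℝ) →ₗ.[ℝ] ℝ)
    (gauge K) (fun c hc x => by simpa using gauge_smul_of_nonneg hc.le x) (gauge_add_le hK habs)
    (fun w => hf w.1 w.2)
  have hgd : ∀ x, x ⬝ᵥ (fun i => g (Pi.single i 1)) = g x := fun x => (lin_dot g x).symm
  refine ⟨fun i => g (Pi.single i 1), ?_, ?_⟩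
  · intro x hx
    rw [hgd]
    exact (hg2 x).trans (gauge_le_one_of_mem hx)
  · intro w hw
    rw [hgd]
    exact hg1 ⟨w, hw⟩

lemma box_nhds {n : ℕ} (K : Set (Fin n → ℝ)) (d : ℝ) (hd1 : d < 1)
    (hbox : ∀ x : Fin n → ℝ, (∀ i, |x i| ≤ 1 - d) → x ∈ K) : K ∈ nhds (0 : Fin n → ℝ) := by
  refine Filter.mem_of_superset (Metric.ball_mem_nhds 0 (by linarith : 0 < 1 - d)) ?_
  intro x hx
  apply hbox
  intro i
  rw [mem_ball_zero_iff] at hx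
  exact (norm_le_pi_norm x i).trans hx.le

lemma quad_le {a B : ℝ} (h : ∀ t : ℝ, 0 < t → t ≤ 1 → 2 * a * t ≤ t ^ 2 * B) : a ≤ 0 := by
  by_contra! ha
  have hB : 0 < B := by have := h 1 one_pos le_rfl; linarith
  have ht : 0 < min 1 (a / B) := lt_min one_pos (by positivity)
  have h1 := h _ ht (min_le_left _ _)
  have h2 : min 1 (a / B) * B ≤ a := by
    calc _ ≤ a / B * B := by gcongr; exact min_le_right _ _
      _ = a := by field_simp
  nlinarith

/-- number of nonzero coordinates -/
def msz {n : ℕ} (s : Fin n → ℤ) : ℝ := ∑ i, |(s i : ℝ)|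

lemma points {n : ℕ} (K : Set (Fin n → ℝ)) (hK : Convex ℝ K) (hc : IsCompact K) (d : ℝ)
    (hd : 0 ≤ d) (hd1 : 4 * n * d ≤ 1) 
    (hbox : ∀ x : Fin n → ℝ, (∀ i, |x i| ≤ 1 - d) → x ∈ K) (hcube : ∀ x ∈ K, ∀ i, |x i| ≤ 1)
    (s : Fin n → ℤ) (hs : s ∈ signs n) (hs0 : s ≠ 0) :
    ∃ x ∈ K, ∃ y ∈ pol K, x ⬝ᵥ y = 1 ∧ (∀ i, |x i - ctr s i| ≤ 4 * n * d) ∧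
      (∀ i, |msz s * y i - ctr s i| ≤ 4 * n * d) := by
  have hsi : ∀ i, s i = -1 ∨ s i = 0 ∨ s i = 1 := by
    intro i
    have := Fintype.mem_piFinset.mp hs i
    simpa using this
  have hsq : ∀ i, (s i : ℝ) * s i = |(s i : ℝ)| := by
    intro i; rcases hsi i with h | h | h <;> simp [h]
  have hsa : ∀ i, s i ≠ 0 → |(s i : ℝ)| = 1 := by
    intro i hi; rcases hsi i with h | h | h
    · simp [h]
    · exact absurd h hi
    · simp [h]
  obtain ⟨i0, hi0⟩ : ∃ i, s i ≠ 0 := by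
    by_contra! h
    exact hs0 (funext h)
  have hn1 : (1 : ℝ) ≤ n := by
    have : 0 < n := i0.pos
    exact_mod_cast this
  have hd4 : d ≤ 1 / 4 := by nlinarith
  have hm1 : 1 ≤ msz s := by
    rw [← hsa i0 hi0]
    exact Finset.single_le_sum (f := fun i => |(s i : ℝ)|) (fun i _ => abs_nonneg _) (Finset.mem_univ i0)
  have hmn : msz s ≤ n := by
    calc msz s ≤ ∑ i : Fin n, (1 : ℝ) := Finset.sum_le_sum fun i _ => by
          rcases hsi i with h | h | h <;> simp [h]
      _ = n := by simp
  set m := msz s with hm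
  let E : Submodule ℝ (Fin n → ℝ) :=
    { carrier := {w | ∀ i, s i = 0 → w i = 0}
      add_mem' := fun {a b} ha hb i hi => by simp [ha i hi, hb i hi]
      zero_mem' := fun i _ => rfl
      smul_mem' := fun c a ha i hi => by simp [ha i hi] }
  have hE : ∀ w, w ∈ E ↔ ∀ i, s i = 0 → w i = 0 := fun w => Iff.rfl
  have hEc : IsClosed (E : Set (Fin n → ℝ)) := E.closed_of_finiteDimensional
  let φ : (Fin n → ℝ) → ℝ := fun w => ∑ i, (2 * (s i : ℝ) - w i) ^ 2
  have hs1 : (fun i => (1 - d) * (s i : ℝ)) ∈ K ∩ E := by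
    refine ⟨hbox _ fun i => ?_, fun i hi => by simp [hi]⟩
    rw [abs_mul, abs_of_nonneg (by linarith : 0 ≤ 1 - d)]
    have : |(s i : ℝ)| ≤ 1 := by rcases hsi i with h | h | h <;> simp [h]
    nlinarith
  obtain ⟨x, hx, hxmin⟩ := (hc.inter_right hEc).exists_isMinOn ⟨_, hs1⟩
    (f := φ) (by apply Continuous.continuousOn; fun_prop)
  have hxE : ∀ i, s i = 0 → x i = 0 := hx.2
  -- deviations
  set u : Fin n → ℝ := fun i => |(s i : ℝ)| - s i * x i with hu
  have hu0 : ∀ i, 0 ≤ u i := by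
    intro i
    have h1 := hcube x hx.1 i
    have h2 : (s i : ℝ) * x i ≤ |(s i : ℝ)| * |x i| := by rw [← abs_mul]; exact le_abs_self _
    have h3 : |(s i : ℝ)| * |x i| ≤ |(s i : ℝ)| * 1 := by gcongr
    simp only [hu]; linarith
  have hxu : ∀ i, x i = s i * (1 - u i) := by
    intro i
    by_cases hi : s i = 0
    · simp [hi, hxE i hi]
    · simp only [hu, hsa i hi]
      have := hsq i
      rw [hsa i hi] at this
      linear_combination (-x i) * this
  have hus : ∀ i, s i = 0 → u i = 0 := by
    intro i hi; simp [hu, hi]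
  have hφx : φ x = m + ∑ i, (2 * u i + u i ^ 2) := by
    simp only [φ, hm, msz, ← Finset.sum_add_distrib]
    refine Finset.sum_congr rfl fun i _ => ?_
    rcases hsi i with h | h | h
    · rw [hxu i, h]; norm_num; ring
    · rw [hxu i, hus i h, h]; norm_num
    · rw [hxu i, h]; norm_num; ring
  have hφ1 : φ (fun i => (1 - d) * (s i : ℝ)) = m * (1 + d) ^ 2 := by
    simp only [φ, hm, msz, Finset.sum_mul]
    refine Finset.sum_congr rfl fun i _ => ?_
    rw [← hsq i]
    ring
  have hsum : ∑ i, (2 * u i + u i ^ 2) ≤ m * (2 * d + d ^ 2) := by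
    have h1 : φ x ≤ φ (fun i => (1 - d) * (s i : ℝ)) := hxmin hs1
    rw [hφx, hφ1] at h1
    linarith
  have hsumu : ∑ i, u i ≤ 5 / 4 * (m * d) := by
    have : ∑ i, 2 * u i ≤ ∑ i, (2 * u i + u i ^ 2) := Finset.sum_le_sum fun i _ => by nlinarith [sq_nonneg (u i)]
    rw [← Finset.mul_sum] at this
    nlinarith [mul_nonneg (by linarith : 0 ≤ m) hd]
  have hmd : m * d ≤ 1 / 4 := by nlinarith
  have hui : ∀ i, u i ≤ 5 / 4 * (m * d) := fun i =>
    (Finset.single_le_sum (fun j _ => hu0 j) (Finset.mem_univ i)).trans hsumu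
  have hsq2 : ∑ i, u i ^ 2 ≤ 5 / 16 * (5 / 4 * (m * d)) := by
    calc ∑ i, u i ^ 2 ≤ ∑ i, 5 / 16 * u i := Finset.sum_le_sum fun i _ => by
          nlinarith [hui i, hu0 i]
      _ ≤ _ := by rw [← Finset.mul_sum]; gcongr
  have hsq0 : 0 ≤ ∑ i, u i ^ 2 := Finset.sum_nonneg fun i _ => sq_nonneg _
  set g : Fin n → ℝ := fun i => 2 * (s i : ℝ) - x i with hg
  set h := x ⬝ᵥ g with hh
  have hhval : h = m - ∑ i, u i ^ 2 := by
    simp only [hh, hg, dotProduct, hm, msz, ← Finset.sum_sub_distrib]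
    refine Finset.sum_congr rfl fun i _ => ?_
    rcases hsi i with h | h | h
    · rw [hxu i, h]; norm_num; ring
    · rw [hxu i, hus i h, h]; norm_num
    · rw [hxu i, h]; norm_num; ring
  have hh34 : 7 / 8 * m ≤ h := by rw [hhval]; nlinarith
  have hhpos : 0 < h := by linarith
  have hvar : ∀ w ∈ K, w ∈ E → w ⬝ᵥ g ≤ h := by
    intro w hw hwE
    have : (w - x) ⬝ᵥ g ≤ 0 := by
      refine quad_le (B := ∑ i, (w i - x i) ^ 2) fun t ht ht1 => ?_
      have hmem : (1 - t) • x + t • w ∈ K ∩ E :=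
        ⟨hK hx.1 hw (by linarith) ht.le (by ring), E.add_mem (E.smul_mem _ hx.2) (E.smul_mem _ hwE)⟩
      have h1 : φ x ≤ φ ((1 - t) • x + t • w) := hxmin hmem
      have h2 : φ ((1 - t) • x + t • w) = φ x - 2 * ((w - x) ⬝ᵥ g) * t + t ^ 2 * ∑ i, (w i - x i) ^ 2 := by
        simp only [φ, dotProduct, Finset.mul_sum, Finset.sum_mul, ← Finset.sum_sub_distrib, ← Finset.sum_add_distrib]
        refine Finset.sum_congr rfl fun i _ => ?_
        simp only [hg, Pi.add_apply, Pi.smul_apply, Pi.sub_apply, smul_eq_mul]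
        ring
      linarith
    rw [sub_dotProduct] at this
    linarith
  obtain ⟨y, hy, hyE⟩ := ext_fun K hK (box_nhds K d (by linarith) hbox) E (h⁻¹ • g) (by
    intro w hw hwE
    rw [dotProduct_smul, smul_eq_mul, inv_mul_le_iff₀ hhpos]
    linarith [hvar w hw hwE])
  have hyi : ∀ i, s i ≠ 0 → y i = h⁻¹ * (s i * (1 + u i)) := by
    intro i hi
    have h1 := hyE (Pi.single i 1) (fun j hj => by
      rw [Pi.single_apply, if_neg]; rintro rfl; exact hi hj)
    rw [single_dotProduct, single_dotProduct] at h1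
    simp only [one_mul, Pi.smul_apply, smul_eq_mul] at h1
    rw [h1]; simp only [hg]; rw [hxu i]; ring
  refine ⟨x, hx.1, y, hy, ?_, ?_, ?_⟩
  · rw [hyE x hx.2, dotProduct_smul, smul_eq_mul, ← hh, inv_mul_cancel₀ hhpos.ne']
  · intro i
    have h1 : x i - ctr s i = - (s i * u i) := by rw [hxu i]; simp only [ctr]; ring
    rw [h1, abs_neg, abs_mul, abs_of_nonneg (hu0 i)]
    have h2 : |(s i : ℝ)| ≤ 1 := by rcases hsi i with h | h | h <;> simp [h]
    have h3 : |(s i : ℝ)| * u i ≤ 1 * u i := by gcongr; exact hu0 i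
    nlinarith [hui i]
  · intro i
    by_cases hi : s i = 0
    · have hl1 := pol_l1 K d (by linarith) hbox y hy
      have h1 : ∑ j, |(s j : ℝ)| * |y j| + |y i| ≤ ∑ j, |y j| := by
        have : ∑ j, |y j| = ∑ j, |(s j : ℝ)| * |y j| + ∑ j, (1 - |(s j : ℝ)|) * |y j| := by
          rw [← Finset.sum_add_distrib]; refine Finset.sum_congr rfl fun j _ => by ring
        rw [this]
        have h2 := Finset.single_le_sum (f := fun j => (1 - |(s j : ℝ)|) * |y j|) (fun j _ => by
          refine mul_nonneg ?_ (abs_nonneg _)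
          rcases hsi j with h | h | h <;> simp [h]) (Finset.mem_univ i)
        simp only [hi, Int.cast_zero, abs_zero, sub_zero, one_mul] at h2
        linarith
      have h2 : 1 ≤ ∑ j, |(s j : ℝ)| * |y j| := by
        have : ∑ j, |(s j : ℝ)| * |y j| = h⁻¹ * (m + ∑ j, u j) := by
          simp only [hm, msz, ← Finset.sum_add_distrib, Finset.mul_sum]
          refine Finset.sum_congr rfl fun j _ => ?_
          by_cases hj : s j = 0
          · simp [hj, hus j hj]
          · rw [hyi j hj, abs_mul, abs_mul, hsa j hj, abs_of_pos (inv_pos.mpr hhpos), abs_of_pos (by linarith [hu0 j])]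
            ring
        rw [this, le_inv_mul_iff₀ hhpos]
        have := Finset.sum_nonneg fun j (_ : j ∈ Finset.univ) => hu0 j
        rw [hhval]; linarith
      have h3 : |y i| ≤ 2 * d := by
        have := abs_nonneg (y i)
        nlinarith
      simp only [ctr, hi, Int.cast_zero, sub_zero]
      rw [abs_mul, abs_of_pos (by linarith)]
      have := abs_nonneg (y i)
      nlinarith
    · have h1 : m * y i - ctr s i = s i * (h⁻¹ * (m * u i + ∑ j, u j ^ 2)) := by
        rw [hyi i hi]
        simp only [ctr]
        have : ∑ j, u j ^ 2 = m - h := by linarith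
        rw [this]
        field_simp
        ring
      have h4 : 0 ≤ m * u i + ∑ j, u j ^ 2 := add_nonneg (mul_nonneg (by linarith) (hu0 i)) hsq0
      rw [h1, abs_mul, hsa i hi, one_mul, abs_of_nonneg (mul_nonneg (inv_nonneg.mpr hhpos.le) h4), inv_mul_le_iff₀ hhpos]
      have h5 : m * u i ≤ m * (5 / 4 * (m * d)) := mul_le_mul_of_nonneg_left (hui i) (by linarith)
      have h6 : 7 / 8 * m * (4 * m * d) ≤ h * (4 * n * d) := by gcongr
      have h7 : m * d ≤ m * (m * d) := by nlinarith [mul_nonneg (by linarith : 0 ≤ m) hd]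
      nlinarith

lemma dot_sg_face {n : ℕ} (f : Flag n) (k : Fin n) :
    ∑ i, ctr (face f k) i * sg f i = (k : ℝ) + 1 := by
  rw [inner_face]
  simp only [sg_mul_self, Finset.sum_const, nsmul_eq_mul, mul_one]
  have : (Finset.univ.filter fun j => j ≤ k) = Finset.Iic k := by ext j; simp
  rw [this, Fin.card_Iic]
  push_cast; ring

lemma ctr_sq_face {n : ℕ} (f : Flag n) (k : Fin n) :
    ∑ i, ctr (face f k) i * ctr (face f k) i = (k : ℝ) + 1 := by
  rw [← dot_sg_face f k]
  refine Finset.sum_congr rfl fun i _ => ?_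
  rw [ctr_face]
  split_ifs <;> simp

lemma msz_face {n : ℕ} (f : Flag n) (k : Fin n) : msz (face f k) = (k : ℝ) + 1 := by
  rw [← dot_sg_face f k]
  refine Finset.sum_congr rfl fun i _ => ?_
  change |ctr (face f k) i| = _
  rw [ctr_face]
  split_ifs <;> simp [sg_mul_self, abs_sg]

lemma abs_ctr_face {n : ℕ} (f : Flag n) (k i : Fin n) : |ctr (face f k) i| ≤ 1 := by
  rw [ctr_face]
  split_ifs <;> simp [abs_sg]

lemma face_zero {n : ℕ} (f : Flag n) (k : Fin n) (hk : k.1 = 0) :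
    face f k = Pi.single (f.1 k) (f.2 (f.1 k) : ℤ) := by
  ext i
  obtain ⟨l, rfl⟩ := f.1.surjective i
  simp only [face, Equiv.symm_apply_apply, Pi.single_apply, EmbeddingLike.apply_eq_iff_eq]
  by_cases h : l = k
  · subst h; simp
  · rw [if_neg h, if_neg]
    intro h'
    apply h
    ext
    rw [Fin.le_def] at h'
    omega

lemma face_ne_zero {n : ℕ} (f : Flag n) (k : Fin n) : face f k ≠ 0 := by
  intro h
  have := msz_face f k
  rw [h] at this
  simp [msz] at this
  have h0 : (0 : ℝ) ≤ (k : ℝ) := by positivity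
  linarith

/-- Data of boundary points of `K` and of its polar, attached to the faces of the cube. -/
structure Setup (n : ℕ) (K : Set (Fin n → ℝ)) (d : ℝ) (X Y : (Fin n → ℤ) → (Fin n → ℝ)) : Prop where
  hn : 2 ≤ n
  conv : Convex ℝ K
  cpt : IsCompact K
  dpos : 0 < d
  dsmall : 100000 * (n : ℝ) ^ 5 * d ≤ 1
  box : ∀ x : Fin n → ℝ, (∀ i, |x i| ≤ 1 - d) → x ∈ K
  cub : ∀ x ∈ K, ∀ i, |x i| ≤ 1
  unit : ∀ i (u : ℤˣ), (Pi.single i ((u : ℤ) : ℝ) : Fin n → ℝ) ∈ K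
  hX : ∀ f k, X (face f k) ∈ K
  hY : ∀ (f : Flag n) (k : Fin n), (1 / ((k : ℝ) + 1)) • Y (face f k) ∈ pol K
  hXY : ∀ (f : Flag n) (k : Fin n), X (face f k) ⬝ᵥ Y (face f k) = (k : ℝ) + 1
  hXd : ∀ (f : Flag n) k i, |X (face f k) i - ctr (face f k) i| ≤ 4 * n * d
  hYd : ∀ (f : Flag n) k i, |Y (face f k) i - ctr (face f k) i| ≤ 4 * n * d
  hY0 : ∀ (f : Flag n) (k : Fin n), k.1 = 0 → Y (face f k) = ctr (face f k)

lemma ctr_single {n : ℕ} (i : Fin n) (u : ℤ) : ctr (Pi.single i u) = Pi.single i (u : ℝ) := by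
  ext j
  by_cases h : j = i
  · subst h; simp [ctr]
  · simp [ctr, h]

lemma exists_setup {n : ℕ} (hn : 2 ≤ n) (K : Set (Fin n → ℝ)) (hK : Convex ℝ K) (hc : IsCompact K)
    (d : ℝ) (hd : 0 < d) (hd1 : 100000 * (n : ℝ) ^ 5 * d ≤ 1)
    (hbox : ∀ x : Fin n → ℝ, (∀ i, |x i| ≤ 1 - d) → x ∈ K) (hcube : ∀ x ∈ K, ∀ i, |x i| ≤ 1)
    (hunit : ∀ i (u : ℤˣ), (Pi.single i ((u : ℤ) : ℝ) : Fin n → ℝ) ∈ K) :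
    ∃ X Y, Setup n K d X Y := by
  classical
  have hn2 : (2 : ℝ) ≤ n := by exact_mod_cast hn
  have h4 : 4 * n * d ≤ 1 := by
    have h5 : (n : ℝ) ≤ (n : ℝ) ^ 5 := le_self_pow₀ (by linarith) (by norm_num)
    nlinarith
  have key : ∀ s : Fin n → ℤ, s ∈ signs n → s ≠ 0 →
      ∃ p : (Fin n → ℝ) × (Fin n → ℝ), p.1 ∈ K ∧ p.2 ∈ pol K ∧ p.1 ⬝ᵥ p.2 = 1 ∧
      (∀ i, |p.1 i - ctr s i| ≤ 4 * n * d) ∧ (∀ i, |msz s * p.2 i - ctr s i| ≤ 4 * n * d) ∧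
      (∀ i (u : ℤˣ), s = Pi.single i (u : ℤ) → p.2 = ctr s) := by
    intro s hs hs0
    by_cases h : ∃ i, ∃ u : ℤˣ, s = Pi.single i (u : ℤ)
    · obtain ⟨i, u, rfl⟩ := h
      have hu : ((u : ℤ) : ℝ) * ((u : ℤ) : ℝ) = 1 := by
        rcases Int.units_eq_one_or u with h | h <;> simp [h]
      have hua : |((u : ℤ) : ℝ)| = 1 := by
        rcases Int.units_eq_one_or u with h | h <;> simp [h]
      have hm : msz (Pi.single i (u : ℤ)) = 1 := by
        unfold msz
        rw [Finset.sum_eq_single i]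
        · simpa using hua
        · intro j _ hj; simp [hj]
        · simp
      refine ⟨(ctr (Pi.single i (u : ℤ)), ctr (Pi.single i (u : ℤ))), ?_, ?_, ?_, ?_, ?_, ?_⟩
      · rw [ctr_single]; exact hunit i u
      · intro x hx
        simp only [ctr_single, dotProduct_single]
        calc x i * ((u : ℤ) : ℝ) ≤ |x i * ((u : ℤ) : ℝ)| := le_abs_self _
          _ ≤ 1 := by rw [abs_mul, hua, mul_one]; exact hcube x hx i
      · simp only [ctr_single, dotProduct_single]; simpa using hu
      · intro j; simp; positivity
      · intro j; rw [hm]; simp; positivity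
      · intro _ _ _; rfl
    · obtain ⟨x, hx, y, hy, h1, h2, h3⟩ := points K hK hc d hd.le h4 hbox hcube s hs hs0
      refine ⟨(x, y), hx, hy, h1, h2, h3, ?_⟩
      intro i u hiu
      exact absurd ⟨i, u, hiu⟩ h
  have key' : ∀ s : Fin n → ℤ, ∃ p : (Fin n → ℝ) × (Fin n → ℝ), s ∈ signs n → s ≠ 0 →
      p.1 ∈ K ∧ p.2 ∈ pol K ∧ p.1 ⬝ᵥ p.2 = 1 ∧
      (∀ i, |p.1 i - ctr s i| ≤ 4 * n * d) ∧ (∀ i, |msz s * p.2 i - ctr s i| ≤ 4 * n * d) ∧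
      (∀ i (u : ℤˣ), s = Pi.single i (u : ℤ) → p.2 = ctr s) := by
    intro s
    by_cases h : s ∈ signs n ∧ s ≠ 0
    · obtain ⟨p, hp⟩ := key s h.1 h.2
      exact ⟨p, fun _ _ => hp⟩
    · exact ⟨0, fun h1 h2 => absurd ⟨h1, h2⟩ h⟩
  choose p hp using key'
  have hpf := fun f k => hp (face f k) (face_mem f k) (face_ne_zero f k)
  have hkpos : ∀ k : Fin n, (k : ℝ) + 1 ≠ 0 := fun k => by positivity
  refine ⟨fun s => (p s).1, fun s => msz s • (p s).2, hn, hK, hc, hd, hd1, hbox, hcube, hunit, ?_, ?_, ?_, ?_, ?_, ?_⟩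
  · intro f k; exact (hpf f k).1
  · intro f k
    rw [msz_face, smul_smul, one_div, inv_mul_cancel₀ (hkpos k), one_smul]
    exact (hpf f k).2.1
  · intro f k
    rw [dotProduct_smul, (hpf f k).2.2.1, msz_face]; simp
  · intro f k; exact (hpf f k).2.2.2.1
  · intro f k i
    exact (hpf f k).2.2.2.2.1 i
  · intro f k hk
    rw [msz_face, hk, (hpf f k).2.2.2.2.2 _ _ (face_zero f k hk)]
    simp

lemma vol_gain {n : ℕ} (hn : 0 < n) (K : Set (Fin n → ℝ)) (hK : Convex ℝ K) (h0 : 0 ∈ K)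
    (P : (Fin n → ℤ) → (Fin n → ℝ)) (η : ℝ) (hη : 0 ≤ η)
    (hη1 : (signs n).card * (4 * η) < 1) (hη2 : 4 * n * η ≤ 1)
    (hP : ∀ (f : Flag n) k i, |P (face f k) i - ctr (face f k) i| ≤ η)
    (lam : Fin n → ℝ) (hlam : ∀ k, 0 < lam k)
    (hmem : ∀ f k, lam k • P (face f k) ∈ K)
    (f0 : Flag n) (b : Fin n → ℝ) (hb : ∀ k, - (1 / (n : ℝ)) ≤ b k) (hb1 : 1 ≤ ∑ k, b k)
    (hbK : Matrix.vecMul (fun k => b k * lam k) (fmat P f0) ∈ K) :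
    ENNReal.ofReal ((∏ k, lam k) / n.factorial *
      (∑ f, |(fmat P f).det| + (1 / 2 * (∑ k, b k - 1)) * |(fmat P f0).det|)) ≤ volume K := by
  have hn0 : (n : ℝ) ≠ 0 := by positivity
  have hs : ∑ k, (1 / 2 * b k + 1 / 2 * (1 / (n : ℝ))) = 1 / 2 * ∑ k, b k + 1 / 2 := by
    rw [Finset.sum_add_distrib, ← Finset.mul_sum]
    simp
    field_simp
  have := vol_main hn K hK h0 P η hη hη1 hη2 hP lam hlam hmem f0
    (fun k => 1 / 2 * b k + 1 / 2 * (1 / n)) (fun k => by linarith [hb k])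
    (by rw [hs]; linarith) ?_
  · rw [hs] at this
    refine le_trans (le_of_eq ?_) this
    congr 2
    ring
  · have hc : Matrix.vecMul (fun k => (1 / (n : ℝ)) * lam k) (fmat P f0) ∈ K := by
      have h1 := conv0 hK h0 (fun _ : Fin n => 1 / (n : ℝ)) (fun k => lam k • P (face f0 k))
        (fun _ => by positivity) (by simp [hn0]) (hmem f0)
      have h2 : Matrix.vecMul (fun k => (1 / (n : ℝ)) * lam k) (fmat P f0)
          = ∑ k : Fin n, (1 / (n : ℝ)) • (lam k • P (face f0 k)) := by
        ext i
        simp [Matrix.vecMul, dotProduct, fmat, mul_assoc]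
      rw [h2]; exact h1
    have h3 := hK hbK hc (a := 1 / 2) (b := 1 / 2) (by norm_num) (by norm_num) (by norm_num)
    have h4 : Matrix.vecMul (fun k => (1 / 2 * b k + 1 / 2 * (1 / (n : ℝ))) * lam k) (fmat P f0) =
        (1 / 2 : ℝ) • Matrix.vecMul (fun k => b k * lam k) (fmat P f0) +
        (1 / 2 : ℝ) • Matrix.vecMul (fun k => (1 / (n : ℝ)) * lam k) (fmat P f0) := by
      rw [← Matrix.smul_vecMul, ← Matrix.smul_vecMul, ← Matrix.add_vecMul]
      congr 1
      ext k
      simp only [Pi.add_apply, Pi.smul_apply, smul_eq_mul]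
      ring
    rw [h4]; exact h3

lemma vol_nogain {n : ℕ} (hn : 0 < n) (K : Set (Fin n → ℝ)) (hK : Convex ℝ K) (h0 : 0 ∈ K)
    (P : (Fin n → ℤ) → (Fin n → ℝ)) (η : ℝ) (hη : 0 ≤ η)
    (hη1 : (signs n).card * (4 * η) < 1) (hη2 : 4 * n * η ≤ 1)
    (hP : ∀ (f : Flag n) k i, |P (face f k) i - ctr (face f k) i| ≤ η)
    (lam : Fin n → ℝ) (hlam : ∀ k, 0 < lam k)
    (hmem : ∀ f k, lam k • P (face f k) ∈ K) :
    ENNReal.ofReal ((∏ k, lam k) / n.factorial * ∑ f, |(fmat P f).det|) ≤ volume K := by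
  have hn0 : (n : ℝ) ≠ 0 := by positivity
  have hs : ∑ _k : Fin n, (1 / (n : ℝ)) = 1 := by simp [hn0]
  have := vol_main hn K hK h0 P η hη hη1 hη2 hP lam hlam hmem (1, 1)
    (fun k => 1 / (n : ℝ)) (fun k => by positivity) hs.ge ?_
  · rw [hs] at this
    simpa using this
  · have h1 := conv0 hK h0 (fun _ : Fin n => 1 / (n : ℝ)) (fun k => lam k • P (face (1, 1) k))
      (fun _ => by positivity) hs.le (hmem (1, 1))
    have h2 : Matrix.vecMul (fun k => (1 / (n : ℝ)) * lam k) (fmat P (1, 1))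
        = ∑ k : Fin n, (1 / (n : ℝ)) • (lam k • P (face (1, 1) k)) := by
      ext i
      simp [Matrix.vecMul, dotProduct, fmat, mul_assoc]
    rw [h2]; exact h1

lemma unit_real (u : ℤˣ) : ((u : ℤ) : ℝ) * ((u : ℤ) : ℝ) = 1 := by
  rcases Int.units_eq_one_or u with h | h <;> simp [h]

lemma unit_abs (u : ℤˣ) : |((u : ℤ) : ℝ)| = 1 := by
  rcases Int.units_eq_one_or u with h | h <;> simp [h]

section
variable {n : ℕ} {K : Set (Fin n → ℝ)} {d : ℝ} {X Y : (Fin n → ℤ) → (Fin n → ℝ)}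

lemma Setup.pw (S : Setup n K d X Y) (j : ℕ) (hj : j ≤ 5) : 100000 * ((n : ℝ) ^ j * d) ≤ 1 := by
  have hn : (1 : ℝ) ≤ n := by exact_mod_cast (by have := S.hn; omega : 1 ≤ n)
  have h1 : (n : ℝ) ^ j ≤ (n : ℝ) ^ 5 := pow_le_pow_right₀ hn hj
  have := S.dsmall
  have := S.dpos
  nlinarith

lemma gain_coord (S : Setup n K d X Y) (v : Fin n → ℤˣ)
    (hv : (fun i => (1 - d / 2) * ((v i : ℤ) : ℝ)) ∉ K) (x : Fin n → ℝ) (hx : x ∈ K) :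
    ∃ i, d / 4 < 1 - ((v i : ℤ) : ℝ) * x i := by
  by_contra! h
  apply hv
  have hd := S.dpos
  have hd1 : d ≤ 1 / 100000 := by have := S.pw 0 (by norm_num); simp at this; linarith
  set w : Fin n → ℝ := fun i => (1 - d / 2) * (((v i : ℤ) : ℝ) - x i) / (d / 2) with hw
  have hwK : w ∈ K := by
    apply S.box
    intro i
    have h1 := h i
    have h2 : 0 ≤ 1 - ((v i : ℤ) : ℝ) * x i := by
      have := S.cub x hx i
      have h3 : ((v i : ℤ) : ℝ) * x i ≤ |((v i : ℤ) : ℝ)| * |x i| := by rw [← abs_mul]; exact le_abs_self _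
      rw [unit_abs] at h3
      linarith
    have h3 : |((v i : ℤ) : ℝ) - x i| ≤ d / 4 := by
      have : ((v i : ℤ) : ℝ) - x i = ((v i : ℤ) : ℝ) * (1 - ((v i : ℤ) : ℝ) * x i) := by
        linear_combination (x i) * unit_real (v i)
      rw [this, abs_mul, unit_abs, one_mul, abs_of_nonneg h2]
      exact h1
    simp only [hw]
    rw [abs_div, abs_mul, abs_of_pos (by linarith : 0 < 1 - d / 2), abs_of_pos (by linarith : 0 < d / 2),
      div_le_iff₀ (by linarith)]
    have := abs_nonneg (((v i : ℤ) : ℝ) - x i)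
    nlinarith
  have := S.conv hx hwK (a := 1 - d / 2) (b := d / 2) (by linarith) (by linarith) (by ring)
  convert this using 1
  ext i
  simp only [hw, Pi.add_apply, Pi.smul_apply, smul_eq_mul]
  field_simp
  ring

lemma gain (S : Setup n K d X Y) (v : Fin n → ℤˣ)
    (hv : (fun i => (1 - d / 2) * ((v i : ℤ) : ℝ)) ∉ K) :
    ∃ f : Flag n,
      (∃ β : Fin n → ℝ, (∀ k, -(1 / (n : ℝ)) ≤ β k) ∧ 1 + d / 32 ≤ ∑ k, β k ∧
        Matrix.vecMul β (fmat X f) ∈ K) ∨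
      (∃ β : Fin n → ℝ, (∀ k, -(1 / (n : ℝ)) ≤ β k) ∧ 1 + d / 32 ≤ ∑ k, β k ∧
        Matrix.vecMul (fun k => β k * (1 / ((k : ℝ) + 1))) (fmat Y f) ∈ pol K) := by
  have hn := S.hn
  have hd := S.dpos
  have hn2 : (2 : ℝ) ≤ n := by exact_mod_cast hn
  have p0 := S.pw 0 (by norm_num)
  have p2 := S.pw 2 (by norm_num)
  have p3 := S.pw 3 (by norm_num)
  have p4 := S.pw 4 (by norm_num)
  have p5 := S.pw 5 (by norm_num)
  simp only [pow_zero, one_mul] at p0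
  let z0 : Fin n := ⟨0, by omega⟩
  let zl : Fin n := ⟨n - 1, by omega⟩
  have h0l : z0 ≠ zl := by
    intro h
    have := congrArg Fin.val h
    simp only [z0, zl] at this
    omega
  have hfl : ∀ f : Flag n, f.2 = v → ∀ i, ctr (face f zl) i = ((v i : ℤ) : ℝ) := by
    intro f hf i
    rw [ctr_face, if_pos]
    · simp [sg, hf]
    · rw [Fin.le_def]
      simp only [zl]
      omega
  have hXl : ∀ f : Flag n, f.2 = v → face f zl = fun i => (v i : ℤ) := by
    intro f hf
    ext i
    have := hfl f hf i
    simp only [ctr] at this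
    exact_mod_cast this
  obtain ⟨i, hi⟩ := gain_coord S v hv (X (fun i => (v i : ℤ))) (by
    rw [← hXl (1, v) rfl]; exact S.hX _ _)
  let f : Flag n := (Equiv.swap z0 i, v)
  have hf0 : f.1 z0 = i := by simp [f]
  have hsg : ∀ j, sg f j = ((v j : ℤ) : ℝ) := fun j => rfl
  have hc0 : ctr (face f z0) = Pi.single i ((v i : ℤ) : ℝ) := by
    rw [face_zero f z0 rfl, hf0, ctr_single]
  have hci : ∀ k, ctr (face f k) i = ((v i : ℤ) : ℝ) := by
    intro k
    rw [ctr_face, if_pos, hsg]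
    rw [← hf0, Equiv.symm_apply_apply, Fin.le_def]
    exact Nat.zero_le _
  have hη : 0 ≤ 4 * (n : ℝ) * d := by positivity
  have hη2 : 4 * (n : ℝ) * (4 * n * d) ≤ 1 := by nlinarith
  refine ⟨f, ?_⟩
  set z : Fin n → ℝ := fun j => (1 - d / 16) * ((ctr (face f z0) j + ((v j : ℤ) : ℝ)) / 2) with hz
  by_cases hzK : z ∈ K
  · left
    set β₀ : Fin n → ℝ := fun k => (if k = z0 then 1 / 2 else 0) + (if k = zl then 1 / 2 else 0) with hβ₀
    have hβ₀0 : ∀ k, 0 ≤ β₀ k := by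
      intro k; simp only [hβ₀]; split_ifs <;> norm_num
    have hβ₀1 : ∀ k, |β₀ k| ≤ 1 := by
      intro k
      rw [abs_of_nonneg (hβ₀0 k)]
      simp only [hβ₀]; split_ifs <;> norm_num
    have hvm : ∀ j, Matrix.vecMul β₀ (fmat ctr f) j = (ctr (face f z0) j + ((v j : ℤ) : ℝ)) / 2 := by
      intro j
      rw [← hfl f rfl j]
      simp only [Matrix.vecMul, dotProduct, fmat, Matrix.of_apply, hβ₀, add_mul, Finset.sum_add_distrib,
        ite_mul, zero_mul, Finset.sum_ite_eq', Finset.mem_univ, if_true]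
      ring
    obtain ⟨β, hβ, hβd⟩ := exists_coef X f (4 * n * d) hη hη2 (S.hXd f) β₀ hβ₀1 z (d / 16) (by linarith) (by
      intro j
      rw [hvm]
      simp only [hz]
      have h1 := abs_ctr_face f z0 j
      have h2 := unit_abs (v j)
      have h3 : |(ctr (face f z0) j + ((v j : ℤ) : ℝ)) / 2| ≤ 1 := by
        rw [abs_div, abs_two, div_le_one two_pos]
        exact (abs_add_le _ _).trans (by linarith)
      have h4 : (1 - d / 16) * ((ctr (face f z0) j + ((v j : ℤ) : ℝ)) / 2) - (ctr (face f z0) j + ((v j : ℤ) : ℝ)) / 2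
          = - (d / 16) * ((ctr (face f z0) j + ((v j : ℤ) : ℝ)) / 2) := by ring
      rw [h4, abs_mul, abs_neg, abs_of_pos (by linarith : 0 < d / 16)]
      nlinarith)
    set ρ := 4 * (d / 16 + n * (4 * n * d)) with hρ
    have hρ1 : ρ ≤ 17 * (n ^ 2 * d) := by rw [hρ]; nlinarith
    have hρ0 : 0 ≤ ρ := by rw [hρ]; positivity
    refine ⟨β, ?_, ?_, ?_⟩
    · intro k
      have h1 := (abs_le.mp (hβd k)).1
      have h2 := hβ₀0 k
      have h3 : 17 * ((n : ℝ) ^ 2 * d) ≤ 1 / n := by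
        rw [le_div_iff₀ (by linarith)]
        nlinarith
      linarith
    · set q : Fin n → ℝ := fun k => 1 - ((v i : ℤ) : ℝ) * X (face f k) i with hq
      have hq0 : ∀ k, 0 ≤ q k := by
        intro k
        have := S.cub _ (S.hX f k) i
        have h3 : ((v i : ℤ) : ℝ) * X (face f k) i ≤ |((v i : ℤ) : ℝ)| * |X (face f k) i| := by
          rw [← abs_mul]; exact le_abs_self _
        rw [unit_abs] at h3
        simp only [hq]; linarith
      have hq1 : ∀ k, q k ≤ 4 * n * d := by
        intro k
        have h1 := S.hXd f k i
        rw [hci] at h1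
        have h2 : q k = -(((v i : ℤ) : ℝ) * (X (face f k) i - ((v i : ℤ) : ℝ))) := by
          simp only [hq]; linear_combination - unit_real (v i)
        rw [h2]
        refine (le_abs_self _).trans ?_
        rw [abs_neg, abs_mul, unit_abs, one_mul]
        exact h1
      have hql : d / 4 < q zl := by
        simp only [hq]; rw [hXl f rfl]; exact hi
      have hzi : ((v i : ℤ) : ℝ) * z i = 1 - d / 16 := by
        simp only [hz]; rw [hci]
        linear_combination (1 - d / 16) * unit_real (v i)
      have hsum : ∑ k, β k = (1 - d / 16) + ∑ k, β k * q k := by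
        have h1 : z i = ∑ k, β k * X (face f k) i := by
          rw [← hβ]; rfl
        rw [← hzi, h1, Finset.mul_sum, ← Finset.sum_add_distrib]
        refine Finset.sum_congr rfl fun k _ => ?_
        simp only [hq]; ring
      have hlow : ∑ k, (β₀ k * q k - ρ * (4 * n * d)) ≤ ∑ k, β k * q k := by
        refine Finset.sum_le_sum fun k _ => ?_
        have h1 := (abs_le.mp (hβd k)).1
        have h2 : ρ * q k ≤ ρ * (4 * n * d) := mul_le_mul_of_nonneg_left (hq1 k) hρ0
        have h3 : (β₀ k - ρ) * q k ≤ β k * q k := mul_le_mul_of_nonneg_right (by linarith) (hq0 k)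
        linarith
      have hb0 : ∑ k, β₀ k * q k = 1 / 2 * q z0 + 1 / 2 * q zl := by
        simp only [hβ₀, add_mul, Finset.sum_add_distrib, ite_mul, zero_mul, Finset.sum_ite_eq', Finset.mem_univ,
          if_true]
      rw [Finset.sum_sub_distrib, hb0] at hlow
      simp only [Finset.sum_const, Finset.card_univ, Fintype.card_fin, nsmul_eq_mul] at hlow
      have hq00 := hq0 z0
      have hfin : (n : ℝ) * (ρ * (4 * n * d)) ≤ d / 32 := by
        have h1 : (n : ℝ) * (ρ * (4 * n * d)) ≤ n * (17 * (n ^ 2 * d) * (4 * n * d)) := by gcongr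
        have h2 : n * (17 * ((n : ℝ) ^ 2 * d) * (4 * n * d)) = 68 * (n ^ 4 * d) * d := by ring
        nlinarith
      linarith
    · rw [hβ]; exact hzK
  · right
    have h0K : (0 : Fin n → ℝ) ∈ K := S.box _ (fun i => by simp; linarith)
    obtain ⟨y, hy, hzy⟩ := sep K S.conv S.cpt.isClosed h0K z hzK
    set a := ((v i : ℤ) : ℝ) * y i with ha
    set e := ∑ j, ((v j : ℤ) : ℝ) * y j with he
    have hzye : z ⬝ᵥ y = (1 - d / 16) * ((a + e) / 2) := by
      have h1 : ∑ j, ctr (face f z0) j * y j = a := by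
        rw [hc0, Finset.sum_eq_single i]
        · simp [ha]
        · intro j _ hj; simp [hj]
        · simp
      rw [← h1, he, ← Finset.sum_add_distrib, Finset.sum_div, Finset.mul_sum]
      simp only [dotProduct, hz]
      refine Finset.sum_congr rfl fun j _ => by ring
    have ha1 : a ≤ 1 := by
      have := hy _ (S.unit i (v i))
      simpa [single_dotProduct] using this
    rw [hzye] at hzy
    have hl1 := pol_l1 K d (by linarith) S.box y hy
    have hl1' : ∑ j, |y j| ≤ 1 + 2 * d := by nlinarith
    have hle : ∀ j, ((v j : ℤ) : ℝ) * y j ≤ |y j| := fun j => by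
      calc _ ≤ |((v j : ℤ) : ℝ) * y j| := le_abs_self _
        _ = |y j| := by rw [abs_mul, unit_abs, one_mul]
    have he1 : e ≤ 1 + 2 * d := (Finset.sum_le_sum fun j _ => hle j).trans hl1'
    have hae : 2 + d / 8 ≤ a + e := by
      by_contra! hlt
      nlinarith
    have hae1 : 1 + d / 8 ≤ e := by linarith
    have hae2 : 1 - 2 * d ≤ a := by linarith
    have hyd : ∀ j, |y j - ctr (face f z0) j| ≤ 4 * d := by
      intro j
      rw [hc0]
      by_cases hj : j = i
      · subst hj
        rw [Pi.single_eq_same]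
        have : y j - ((v j : ℤ) : ℝ) = ((v j : ℤ) : ℝ) * (a - 1) := by
          simp only [ha]; linear_combination (- y j) * unit_real (v j)
        rw [this, abs_mul, unit_abs, one_mul, abs_le]
        constructor <;> linarith
      · rw [Pi.single_eq_of_ne hj, sub_zero]
        have h1 : |y i| + |y j| ≤ ∑ j, |y j| := by
          rw [← Finset.sum_pair (f := fun j => |y j|) (Ne.symm hj)]
          exact Finset.sum_le_sum_of_subset_of_nonneg (Finset.subset_univ _) (fun _ _ _ => abs_nonneg _)
        have h2 := hle i
        linarith
    obtain ⟨β, hβ, hβd⟩ := exists_coef Y f (4 * n * d) hη hη2 (S.hYd f) (fun k => if k = z0 then 1 else 0)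
      (fun k => by split_ifs <;> simp) y (4 * d) (by linarith) (by
      intro j
      have : Matrix.vecMul (fun k => if k = z0 then (1 : ℝ) else 0) (fmat ctr f) j = ctr (face f z0) j := by
        simp [Matrix.vecMul, dotProduct, fmat]
      rw [this]
      exact hyd j)
    set ρ := 4 * (4 * d + n * (4 * n * d)) with hρ
    have hρ1 : ρ ≤ 32 * (n ^ 2 * d) := by rw [hρ]; nlinarith
    have hρ0 : 0 ≤ ρ := by rw [hρ]; positivity
    have hk1 : ∀ k : Fin n, (k : ℝ) + 1 ≤ n := by
      intro k; exact_mod_cast k.2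
    refine ⟨fun k => ((k : ℝ) + 1) * β k, ?_, ?_, ?_⟩
    · intro k
      have h1 := (abs_le.mp (hβd k)).1
      have h2 : (0 : ℝ) ≤ if k = z0 then 1 else 0 := by split_ifs <;> norm_num
      have h3 : (n : ℝ) * (32 * (n ^ 2 * d)) ≤ 1 / n := by
        rw [le_div_iff₀ (by linarith)]
        nlinarith
      have h4 : ((k : ℝ) + 1) * (-ρ) ≤ ((k : ℝ) + 1) * β k :=
        mul_le_mul_of_nonneg_left (by linarith) (by positivity)
      have h5 : ((k : ℝ) + 1) * ρ ≤ n * (32 * (n ^ 2 * d)) :=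
        mul_le_mul (hk1 k) hρ1 hρ0 (by positivity)
      linarith
    · set q : Fin n → ℝ := fun k => ((k : ℝ) + 1) - ∑ j, ((v j : ℤ) : ℝ) * Y (face f k) j with hq
      have hqe : ∀ k, q k = - ∑ j, ((v j : ℤ) : ℝ) * (Y (face f k) j - ctr (face f k) j) := by
        intro k
        simp only [hq]
        rw [← dot_sg_face f k]
        simp only [hsg, mul_sub, Finset.sum_sub_distrib]
        simp only [mul_comm]
        ring
      have hqa : ∀ k, |q k| ≤ n * (4 * n * d) := by
        intro k
        rw [hqe, abs_neg]
        refine (Finset.abs_sum_le_sum_abs _ _).trans ?_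
        calc _ ≤ ∑ j : Fin n, 4 * n * d := Finset.sum_le_sum fun j _ => by
              rw [abs_mul, unit_abs, one_mul]; exact S.hYd f k j
          _ = _ := by simp
      have hq0 : q z0 = 0 := by
        rw [hqe, S.hY0 f z0 rfl]; simp
      have hsum : ∑ k : Fin n, ((k : ℝ) + 1) * β k = e + ∑ k, β k * q k := by
        have h1 : e = ∑ k, β k * ∑ j, ((v j : ℤ) : ℝ) * Y (face f k) j := by
          rw [he]
          have h2 : ∀ j, y j = ∑ k, β k * Y (face f k) j := by
            intro j
            rw [← hβ]; rfl
          simp_rw [h2, Finset.mul_sum]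
          rw [Finset.sum_comm]
          refine Finset.sum_congr rfl fun k _ => Finset.sum_congr rfl fun j _ => by ring
        rw [h1, ← Finset.sum_add_distrib]
        refine Finset.sum_congr rfl fun k _ => ?_
        simp only [hq]; ring
      have hlow : ∑ k : Fin n, (- (ρ * (n * (4 * n * d)))) ≤ ∑ k, β k * q k := by
        refine Finset.sum_le_sum fun k _ => ?_
        have h1 := hβd k
        by_cases hk : k = z0
        · rw [hk, hq0, mul_zero]
          have : 0 ≤ ρ * (n * (4 * n * d)) := by positivity
          linarith
        · simp only [hk, if_false, sub_zero] at h1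
          have h3 : |β k * q k| ≤ ρ * (n * (4 * n * d)) := by
            rw [abs_mul]; exact mul_le_mul h1 (hqa k) (abs_nonneg _) hρ0
          exact (abs_le.mp h3).1
      simp only [Finset.sum_const, Finset.card_univ, Fintype.card_fin, nsmul_eq_mul] at hlow
      have hfin : (n : ℝ) * (ρ * (n * (4 * n * d))) ≤ d / 32 := by
        have h1 : (n : ℝ) * (ρ * (n * (4 * n * d))) ≤ n * (32 * (n ^ 2 * d) * (n * (4 * n * d))) := by gcongr
        have h2 : n * (32 * ((n : ℝ) ^ 2 * d) * (n * (4 * n * d))) = 128 * (n ^ 5 * d) * d := by ring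
        nlinarith
      linarith
    · have : (fun k : Fin n => ((k : ℝ) + 1) * β k * (1 / ((k : ℝ) + 1))) = β := by
        ext k
        have : (k : ℝ) + 1 ≠ 0 := by positivity
        field_simp
      rw [this, hβ]
      exact hy
end

lemma final_ineq (N C c : ℝ) (hN : 1 ≤ N) (hC : 0 ≤ C) (hc : 0 < c) :
    ∃ d0 : ℝ, 0 < d0 ∧ ∀ d A B a b g : ℝ, 0 < d → d ≤ d0 → N + a - C * d ^ 2 ≤ A →
      N + b - C * d ^ 2 ≤ B → - (C * d ^ 2) ≤ a + b → |a| ≤ C * d → |b| ≤ C * d → c * d ≤ g →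
      N ^ 2 < (A + g) * B := by
  set Q := 3 * C * N + 2 * C * (2 * C + c) + 4 * C + 1 with hQ
  have hQ1 : 1 ≤ Q := by
    have : 0 ≤ 3 * C * N + 2 * C * (2 * C + c) + 4 * C := by positivity
    linarith
  refine ⟨min (1 / Q) (c / Q), by positivity, ?_⟩
  intro d A B a b g hd hd0 hA hB hab ha hb hg
  have h1 : d * Q ≤ 1 := by
    have := hd0.trans (min_le_left _ _)
    rwa [le_div_iff₀ (by linarith)] at this
  have h2 : d * Q ≤ c := by
    have := hd0.trans (min_le_right _ _)
    rwa [le_div_iff₀ (by linarith)] at this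
  have hd1 : d ≤ 1 := by nlinarith
  have hdd : C * d ^ 2 ≤ C * d := by
    have : d ^ 2 ≤ d := by nlinarith
    exact mul_le_mul_of_nonneg_left this hC
  set p := a - C * d ^ 2 + c * d with hp
  set q := b - C * d ^ 2 with hq
  have hcd : 0 < c * d := mul_pos hc hd
  have hCd2 : 0 ≤ C * d ^ 2 := by positivity
  have hCd : 0 ≤ C * d := by positivity
  rw [abs_le] at ha hb
  have hpa : |p| ≤ (2 * C + c) * d := by
    rw [abs_le]; constructor <;> simp only [hp] <;> nlinarith
  have hqa : |q| ≤ 2 * C * d := by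
    rw [abs_le]; constructor <;> simp only [hq] <;> nlinarith
  have hpq : - ((2 * C + c) * d * (2 * C * d)) ≤ p * q := by
    have : |p * q| ≤ (2 * C + c) * d * (2 * C * d) := by
      rw [abs_mul]; exact mul_le_mul hpa hqa (abs_nonneg _) (by positivity)
    exact (abs_le.mp this).1
  have hsum : c * d - 3 * C * d ^ 2 ≤ p + q := by simp only [hp, hq]; linarith
  have h4C : 4 * C * d ≤ 1 := by
    have h3 : 4 * C ≤ Q := by
      have : 0 ≤ 3 * C * N + 2 * C * (2 * C + c) := by positivity
      linarith
    nlinarith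
  have hB0 : 0 ≤ N + q := by
    have := (abs_le.mp hqa).1
    linarith
  have hA0 : 0 ≤ N + p := by simp only [hp]; linarith
  have hmain : (N + p) * (N + q) ≤ (A + g) * B := by
    apply mul_le_mul _ _ hB0 _
    · simp only [hp]; linarith
    · simp only [hq]; linarith
    · simp only [hp] at hA0; linarith
  have hNs : N * (c * d - 3 * C * d ^ 2) ≤ N * (p + q) := mul_le_mul_of_nonneg_left hsum (by linarith)
  have hlast : (3 * C * N + 2 * C * (2 * C + c)) * d * d < N * c * d := by
    have h5 : (3 * C * N + 2 * C * (2 * C + c)) * d < d * Q := by rw [hQ]; nlinarith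
    have h6 : (3 * C * N + 2 * C * (2 * C + c)) * d < N * c := by nlinarith
    exact mul_lt_mul_of_pos_right h6 hd
  nlinarith

lemma pair_term {n : ℕ} (f : Flag n) (k : Fin n) (x y : Fin n → ℝ) (η : ℝ)
    (hxy : x ⬝ᵥ y = (k : ℝ) + 1) (hx : ∀ i, |x i - ctr (face f k) i| ≤ η)
    (hy : ∀ i, |y i - ctr (face f k) i| ≤ η) :
    - (n * η ^ 2) ≤ (1 / ((k : ℝ) + 1)) * (∑ i, ctr (face f k) i * (x - ctr (face f k)) i) +
      (1 / ((k : ℝ) + 1)) * (∑ i, ctr (face f k) i * (y - ctr (face f k)) i) := by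
  set s := ctr (face f k) with hs
  have h1 : (∑ i, s i * (x - s) i) + (∑ i, s i * (y - s) i) = - ∑ i, (x i - s i) * (y i - s i) := by
    have h2 : ∑ i, s i * s i = x ⬝ᵥ y := by rw [hxy]; exact ctr_sq_face f k
    have h3 : ∑ i, (x i - s i) * (y i - s i) = x ⬝ᵥ y - ∑ i, s i * (x - s) i - ∑ i, s i * (y - s) i - ∑ i, s i * s i := by
      simp only [dotProduct, ← Finset.sum_sub_distrib, Pi.sub_apply]
      refine Finset.sum_congr rfl fun i _ => by ring
    rw [h3, h2]; ring
  rw [← mul_add, h1]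
  have h4 : |∑ i, (x i - s i) * (y i - s i)| ≤ n * η ^ 2 := by
    refine (Finset.abs_sum_le_sum_abs _ _).trans ?_
    calc _ ≤ ∑ i : Fin n, η ^ 2 := Finset.sum_le_sum fun i _ => by
          rw [abs_mul, sq]
          exact mul_le_mul (hx i) (hy i) (abs_nonneg _) ((abs_nonneg _).trans (hx i))
      _ = _ := by simp
  have h5 : 1 / ((k : ℝ) + 1) ≤ 1 := by
    rw [div_le_one (by positivity)]
    have : (0 : ℝ) ≤ (k : ℝ) := by positivity
    linarith
  have h6 : 0 ≤ 1 / ((k : ℝ) + 1) := by positivity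
  have h7 := (abs_le.mp h4).2
  have h8 : 0 ≤ (n : ℝ) * η ^ 2 := by positivity
  nlinarith

lemma sum_term {n : ℕ} (f : Flag n) (k : Fin n) (x : Fin n → ℝ) (η : ℝ)
    (hx : ∀ i, |x i - ctr (face f k) i| ≤ η) :
    |(1 / ((k : ℝ) + 1)) * (∑ i, ctr (face f k) i * (x - ctr (face f k)) i)| ≤ n * η := by
  have h5 : 1 / ((k : ℝ) + 1) ≤ 1 := by
    rw [div_le_one (by positivity)]
    have : (0 : ℝ) ≤ (k : ℝ) := by positivity
    linarith
  have h6 : 0 ≤ 1 / ((k : ℝ) + 1) := by positivity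
  rw [abs_mul, abs_of_nonneg h6]
  have h4 : |∑ i, ctr (face f k) i * (x - ctr (face f k)) i| ≤ n * η := by
    refine (Finset.abs_sum_le_sum_abs _ _).trans ?_
    calc _ ≤ ∑ i : Fin n, η := Finset.sum_le_sum fun i _ => by
          rw [abs_mul]
          calc _ ≤ 1 * η := mul_le_mul (abs_ctr_face f k i) (hx i) (abs_nonneg _) zero_le_one
            _ = η := one_mul _
      _ = _ := by simp
  calc _ ≤ 1 * (n * η) := mul_le_mul h5 h4 (abs_nonneg _) zero_le_one
    _ = _ := one_mul _

lemma prod_lam (n : ℕ) : ∏ k : Fin n, (1 / ((k : ℝ) + 1)) = 1 / n.factorial := by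
  rw [Fin.prod_univ_eq_prod_range (fun k => 1 / ((k : ℝ) + 1)) n]
  rw [← Finset.prod_range_add_one_eq_factorial]
  push_cast
  simp

lemma card_flag (n : ℕ) : (Fintype.card (Flag n) : ℝ) = 2 ^ n * n.factorial := by
  unfold Flag
  rw [Fintype.card_prod, Fintype.card_perm, Fintype.card_fun]
  simp
  ring

set_option maxHeartbeats 1600000 in
lemma core (n : ℕ) (hn : 2 ≤ n) : ∃ d0 : ℝ, 0 < d0 ∧ ∀ K : Set (Fin n → ℝ), Convex ℝ K → IsCompact K →
    (∀ i (u : ℤˣ), (Pi.single i ((u : ℤ) : ℝ) : Fin n → ℝ) ∈ K) → (∀ x ∈ K, ∀ i, |x i| ≤ 1) →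
    ∀ d : ℝ, 0 < d → d ≤ d0 → (∀ x : Fin n → ℝ, (∀ i, |x i| ≤ 1 - d) → x ∈ K) →
    ∀ v : Fin n → ℤˣ, (fun i => (1 - d / 2) * ((v i : ℤ) : ℝ)) ∉ K →
    (4 : ℝ≥0∞) ^ n / (n.factorial : ℝ≥0∞) < volume K * volume (pol K) := by
  obtain ⟨C, hC, hfo⟩ := first_order n
  set N : ℝ := (Fintype.card (Flag n) : ℝ) with hN
  have hn2 : (2 : ℝ) ≤ n := by exact_mod_cast hn
  have hN1 : 1 ≤ N := by
    rw [hN, card_flag]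
    have h1 : (1 : ℝ) ≤ 2 ^ n := one_le_pow₀ (by norm_num)
    have h2 : (1 : ℝ) ≤ n.factorial := by exact_mod_cast n.factorial_pos
    nlinarith
  set Cf := C * (16 * n ^ 2) + N * (n * (n * (16 * n ^ 2))) + N * (n * (n * (4 * n))) with hCf
  have hCf0 : 0 ≤ Cf := by positivity
  obtain ⟨d1, hd1, hfin⟩ := final_ineq N Cf (1 / 128) hN1 hCf0 (by norm_num)
  set R : ℝ := 100000 * (n : ℝ) ^ 5 + (signs n).card * (4 * (4 * n)) + 2 * C * (4 * n) + 1 with hR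
  have hRpos : 1 ≤ R := by
    have : 0 ≤ 100000 * (n : ℝ) ^ 5 + (signs n).card * (4 * (4 * n)) + 2 * C * (4 * n) := by positivity
    linarith
  refine ⟨min d1 (1 / (2 * R)), by positivity, ?_⟩
  intro K hK hc hunit hcube d hd hd0 hbox v hv
  have hdR : 2 * R * d ≤ 1 := by
    have := hd0.trans (min_le_right _ _)
    rw [le_div_iff₀ (by linarith)] at this
    linarith
  have hdd1 := hd0.trans (min_le_left _ _)
  have e1 : 0 ≤ 100000 * (n : ℝ) ^ 5 * d := by positivity
  have e2 : 0 ≤ (signs n).card * (4 * (4 * n * d)) := by positivity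
  have e3 : 0 ≤ 2 * C * (4 * n * d) := by positivity
  have hRd : 100000 * (n : ℝ) ^ 5 * d + (signs n).card * (4 * (4 * n * d)) + 2 * C * (4 * n * d) + d ≤ 1 / 2 := by
    have : R * d = 100000 * (n : ℝ) ^ 5 * d + (signs n).card * (4 * (4 * n * d)) + 2 * C * (4 * n * d) + d := by
      rw [hR]; ring
    linarith
  obtain ⟨X, Y, S⟩ := exists_setup hn K hK hc d hd (by linarith) hbox hcube hunit
  set η := 4 * n * d with hη
  have hη0 : 0 ≤ η := by positivity
  have p2 := S.pw 2 (by norm_num)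
  have hη2 : 4 * n * η ≤ 1 := by rw [hη]; nlinarith
  have hη3 : 2 * η ≤ 1 := by nlinarith
  have hη1 : (signs n).card * (4 * η) < 1 := by linarith
  obtain ⟨hXdet, hXsum⟩ := hfo X η hη0 hη3 S.hXd
  obtain ⟨hYdet, hYsum⟩ := hfo Y η hη0 hη3 S.hYd
  set a := ∑ f : Flag n, ∑ k : Fin n, (1 / ((k : ℝ) + 1)) * ∑ i, ctr (face f k) i * (X (face f k) - ctr (face f k)) i with ha
  set b := ∑ f : Flag n, ∑ k : Fin n, (1 / ((k : ℝ) + 1)) * ∑ i, ctr (face f k) i * (Y (face f k) - ctr (face f k)) i with hb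
  set A := ∑ f, |(fmat X f).det| with hA
  set B := ∑ f, |(fmat Y f).det| with hB
  have hCη : C * η ^ 2 ≤ Cf * d ^ 2 := by
    have h1 : C * η ^ 2 = C * (16 * n ^ 2) * d ^ 2 := by rw [hη]; ring
    rw [h1]
    apply mul_le_mul_of_nonneg_right _ (sq_nonneg d)
    have : 0 ≤ N * (n * (n * (16 * n ^ 2))) + N * (n * (n * (4 * n))) := by positivity
    rw [hCf]; linarith
  have hab : - (Cf * d ^ 2) ≤ a + b := by
    have h1 : ∑ f : Flag n, ∑ k : Fin n, (- (n * η ^ 2)) ≤ a + b := by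
      rw [ha, hb, ← Finset.sum_add_distrib]
      refine Finset.sum_le_sum fun f _ => ?_
      rw [← Finset.sum_add_distrib]
      exact Finset.sum_le_sum fun k _ => pair_term f k _ _ η (S.hXY f k) (S.hXd f k) (S.hYd f k)
    simp only [Finset.sum_const, Finset.card_univ, Fintype.card_fin, nsmul_eq_mul] at h1
    rw [← hN] at h1
    have h2 : N * (n * -(n * η ^ 2)) = - (N * (n * (n * (16 * n ^ 2))) * d ^ 2) := by rw [hη]; ring
    rw [h2] at h1
    have h3 : N * (n * (n * (16 * n ^ 2))) * d ^ 2 ≤ Cf * d ^ 2 := by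
      apply mul_le_mul_of_nonneg_right _ (sq_nonneg d)
      have : 0 ≤ C * (16 * n ^ 2) + N * (n * (n * (4 * n))) := by positivity
      rw [hCf]; linarith
    linarith
  have habs : ∀ P : (Fin n → ℤ) → (Fin n → ℝ), (∀ (f : Flag n) k i, |P (face f k) i - ctr (face f k) i| ≤ η) →
      |∑ f : Flag n, ∑ k : Fin n, (1 / ((k : ℝ) + 1)) * ∑ i, ctr (face f k) i * (P (face f k) - ctr (face f k)) i|
      ≤ Cf * d := by
    intro P hP
    have h1 : |∑ f : Flag n, ∑ k : Fin n, (1 / ((k : ℝ) + 1)) * ∑ i, ctr (face f k) i * (P (face f k) - ctr (face f k)) i|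
        ≤ ∑ f : Flag n, ∑ k : Fin n, (n * η) := by
      refine (Finset.abs_sum_le_sum_abs _ _).trans (Finset.sum_le_sum fun f _ => ?_)
      refine (Finset.abs_sum_le_sum_abs _ _).trans (Finset.sum_le_sum fun k _ => ?_)
      exact sum_term f k _ η (hP f k)
    simp only [Finset.sum_const, Finset.card_univ, Fintype.card_fin, nsmul_eq_mul] at h1
    rw [← hN] at h1
    have h2 : N * (n * (n * η)) = N * (n * (n * (4 * n))) * d := by rw [hη]; ring
    rw [h2] at h1
    refine h1.trans ?_
    apply mul_le_mul_of_nonneg_right _ hd.le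
    have : 0 ≤ C * (16 * n ^ 2) + N * (n * (n * (16 * n ^ 2))) := by positivity
    rw [hCf]; linarith
  have haa := habs X S.hXd
  have hba := habs Y S.hYd
  have h0K : (0 : Fin n → ℝ) ∈ K := hbox _ (fun i => by simp; linarith)
  have hnpos : 0 < n := by omega
  have hdetX : ∀ f, 1 / 2 ≤ |(fmat X f).det| := fun f => by
    have := hXdet f; linarith
  have hdetY : ∀ f, 1 / 2 ≤ |(fmat Y f).det| := fun f => by
    have := hYdet f; linarith
  have hA0 : 0 ≤ A := Finset.sum_nonneg fun f _ => abs_nonneg _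
  have hB0 : 0 ≤ B := Finset.sum_nonneg fun f _ => abs_nonneg _
  have hF : (0 : ℝ) < n.factorial := by exact_mod_cast n.factorial_pos
  -- it suffices to have a real estimate
  have suff : ∀ A' B' : ℝ, 0 ≤ A' → 0 ≤ B' → N ^ 2 < A' * B' →
      ENNReal.ofReal (1 / n.factorial * A') ≤ volume K →
      ENNReal.ofReal (1 / n.factorial / n.factorial * B') ≤ volume (pol K) →
      (4 : ℝ≥0∞) ^ n / (n.factorial : ℝ≥0∞) < volume K * volume (pol K) := by
    intro A' B' hA' hB' hlt h1 h2
    refine lt_of_lt_of_le ?_ (mul_le_mul' h1 h2)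
    rw [← ENNReal.ofReal_mul (by positivity)]
    have h3 : (4 : ℝ≥0∞) ^ n / (n.factorial : ℝ≥0∞) = ENNReal.ofReal (4 ^ n / n.factorial) := by
      rw [ENNReal.ofReal_div_of_pos hF, ENNReal.ofReal_pow (by norm_num), ENNReal.ofReal_natCast]
      norm_num
    rw [h3, ENNReal.ofReal_lt_ofReal_iff_of_nonneg (by positivity)]
    have h4 : (4 : ℝ) ^ n = 2 ^ n * 2 ^ n := by rw [← mul_pow]; norm_num
    have h5 : (4 : ℝ) ^ n / n.factorial = 1 / n.factorial * (1 / n.factorial / n.factorial) * N ^ 2 := by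
      rw [hN, card_flag, h4]; field_simp
    rw [h5]
    have h6 : 1 / (n.factorial : ℝ) * A' * (1 / n.factorial / n.factorial * B')
        = 1 / n.factorial * (1 / n.factorial / n.factorial) * (A' * B') := by ring
    rw [h6]
    exact mul_lt_mul_of_pos_left hlt (by positivity)
  have hYl : ∀ k : Fin n, 0 < 1 / ((k : ℝ) + 1) := fun k => by positivity
  obtain ⟨f, h | h⟩ := gain S v hv
  · obtain ⟨β, hβ1, hβ2, hβ3⟩ := h
    have h1 := vol_gain hnpos K hK h0K X η hη0 hη1 hη2 S.hXd (fun _ => 1) (fun _ => one_pos)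
      (fun f k => by rw [one_smul]; exact S.hX f k) f β hβ1 (by linarith) (by simpa using hβ3)
    have h2 := vol_nogain hnpos (pol K) (pol_convex K) (pol_zero K) Y η hη0 hη1 hη2 S.hYd
      (fun k => 1 / ((k : ℝ) + 1)) hYl S.hY
    rw [prod_lam] at h2
    rw [Finset.prod_const_one] at h1
    have hg : 1 / 128 * d ≤ 1 / 2 * (∑ k, β k - 1) * |(fmat X f).det| := by
      have h3 : d / 64 ≤ 1 / 2 * (∑ k, β k - 1) := by linarith
      nlinarith [hdetX f]
    refine suff _ _ ?_ hB0 (hfin d A B a b _ hd hdd1 (by linarith) (by linarith) hab haa hba hg) h1 h2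
    linarith
  · obtain ⟨β, hβ1, hβ2, hβ3⟩ := h
    have h1 := vol_nogain hnpos K hK h0K X η hη0 hη1 hη2 S.hXd (fun _ => 1) (fun _ => one_pos)
      (fun f k => by rw [one_smul]; exact S.hX f k)
    have h2 := vol_gain hnpos (pol K) (pol_convex K) (pol_zero K) Y η hη0 hη1 hη2 S.hYd
      (fun k => 1 / ((k : ℝ) + 1)) hYl S.hY f β hβ1 (by linarith) hβ3
    rw [prod_lam] at h2
    rw [Finset.prod_const_one] at h1
    have hg : 1 / 128 * d ≤ 1 / 2 * (∑ k, β k - 1) * |(fmat Y f).det| := by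
      have h3 : d / 64 ≤ 1 / 2 * (∑ k, β k - 1) := by linarith
      nlinarith [hdetY f]
    refine suff _ _ hA0 ?_ ?_ h1 h2
    · linarith
    · rw [mul_comm]
      exact hfin d B A b a _ hd hdd1 (by linarith) (by linarith) (by linarith) hba haa hg

lemma hadamard {n : ℕ} (Y : Matrix (Fin n) (Fin n) ℝ) : Y.det ^ 2 ≤ ∏ i, ∑ j, Y i j ^ 2 := by
  let b := EuclideanSpace.basisFun (Fin n) ℝ
  have : Fact (Module.finrank ℝ (EuclideanSpace ℝ (Fin n)) = n) := ⟨by simp⟩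
  let v : Fin n → EuclideanSpace ℝ (Fin n) := fun i => WithLp.toLp 2 (Y i)
  have h := (b.toBasis.orientation).abs_volumeForm_apply_le v
  rw [Orientation.volumeForm_robust _ b rfl, Module.Basis.det_apply] at h
  have h2 : b.toBasis.toMatrix v = Y.transpose := by
    ext i j
    simp [b, v, Module.Basis.toMatrix_apply]
  rw [h2, Matrix.det_transpose] at h
  have h3 := pow_le_pow_left₀ (abs_nonneg _) h 2
  rw [sq_abs, ← Finset.prod_pow] at h3
  refine h3.trans (le_of_eq (Finset.prod_congr rfl fun i _ => ?_))
  rw [EuclideanSpace.norm_sq_eq]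
  simp [v]

lemma row_l2 {n : ℕ} (y : Fin n → ℝ) (i : Fin n) (h : ∑ j, |y j| ≤ 1) (hi : 3 / 4 ≤ y i) :
    ∑ j, y j ^ 2 ≤ y i := by
  have h1 : ∀ j, |y j| ≤ y i := by
    intro j
    by_cases hj : j = i
    · subst hj; rw [abs_of_nonneg (by linarith)]
    · have := Finset.add_le_sum (s := Finset.univ) (f := fun j => |y j|) (fun j _ => abs_nonneg _)
        (Finset.mem_univ i) (Finset.mem_univ j) (Ne.symm hj)
      have h3 := le_abs_self (y i)
      linarith
  calc _ ≤ ∑ j, y i * |y j| := Finset.sum_le_sum fun j _ => by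
        rw [← sq_abs, sq]; exact mul_le_mul_of_nonneg_right (h1 j) (abs_nonneg _)
    _ = y i * ∑ j, |y j| := by rw [Finset.mul_sum]
    _ ≤ y i * 1 := mul_le_mul_of_nonneg_left h (by linarith)
    _ = y i := mul_one _

lemma inv_dot {n : ℕ} (Y : Matrix (Fin n) (Fin n) ℝ) (hY : Y.det ≠ 0) (i : Fin n) (y : Fin n → ℝ) :
    (Y⁻¹.mulVec (Pi.single i 1)) ⬝ᵥ y = (Y.updateRow i y).det / Y.det := by
  rw [← Matrix.cramer_transpose_apply, Matrix.cramer_eq_adjugate_mulVec, Matrix.inv_def]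
  simp only [Matrix.mulVec, dotProduct, ← Matrix.adjugate_transpose, Matrix.transpose_apply,
    Matrix.smul_apply, smul_eq_mul, Ring.inverse_eq_inv']
  rw [Finset.sum_div]
  refine Finset.sum_congr rfl fun j _ => ?_
  simp [Pi.single_apply]
  field_simp

lemma position (n : ℕ) (K : Set (Fin n → ℝ)) (hK : Convex ℝ K) (hc : IsCompact K)
    (hs : ∀ x ∈ K, -x ∈ K) (δ : ℝ) (hδ : 0 < δ) (hδn : 8 * n * δ < 1) (hδ1 : δ < 1 / 4)
    (hin : ∀ x : Fin n → ℝ, (∀ i, |x i| ≤ 1) → x ∈ K) (hout : ∀ x ∈ K, ∀ i, |x i| ≤ 1 + δ) :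
    ∃ Y : Matrix (Fin n) (Fin n) ℝ, Y.det ≠ 0 ∧ (∀ x ∈ K, ∀ i, |(Y.mulVec x) i| ≤ 1) ∧
      (∀ i, ∃ u ∈ K, Y.mulVec u = Pi.single i 1) ∧
      (∀ z : Fin n → ℝ, (∀ i, |z i| ≤ 1 - 4 * n * δ) → ∃ x ∈ K, Y.mulVec x = z) := by
  have h0 : (0 : Fin n → ℝ) ∈ K := hin _ (by simp)
  have hl1 : ∀ y ∈ pol K, ∑ i, |y i| ≤ 1 := fun y hy => by
    simpa using pol_l1 K 0 (by norm_num) (by simpa using hin) y hy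
  let P : Set (Matrix (Fin n) (Fin n) ℝ) := {Y | ∀ i, Y i ∈ pol K ∧ 3 / 4 ≤ Y i i}
  have hPc : IsCompact P := by
    have hb : P ⊆ (Set.univ.pi fun _ : Fin n => Set.univ.pi fun _ : Fin n => Set.Icc (-1 : ℝ) 1 :
        Set (Fin n → Fin n → ℝ)) := by
      intro Y hY i _ j _
      have h := (Finset.single_le_sum (f := fun j => |Y i j|) (fun j _ => abs_nonneg _)
        (Finset.mem_univ j)).trans (hl1 _ (hY i).1)
      exact abs_le.mp h
    refine IsCompact.of_isClosed_subset
      (isCompact_univ_pi fun _ => isCompact_univ_pi fun _ => isCompact_Icc) ?_ hb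
    have : P = ⋂ i, ((fun Y : Matrix (Fin n) (Fin n) ℝ => Y i) ⁻¹' pol K ∩ {Y | 3 / 4 ≤ Y i i}) := by
      ext Y; simp [P]
    rw [this]
    refine isClosed_iInter fun i => IsClosed.inter ((pol_closed K).preimage (continuous_apply i)) ?_
    exact isClosed_le continuous_const ((continuous_apply i).comp (continuous_apply i))
  have hI : ((1 - δ) • (1 : Matrix (Fin n) (Fin n) ℝ)) ∈ P := by
    intro i
    constructor
    · intro x hx
      have : x ⬝ᵥ ((1 - δ) • (1 : Matrix (Fin n) (Fin n) ℝ)) i = (1 - δ) * x i := by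
        simp [dotProduct, Matrix.one_apply, mul_comm]
      rw [this]
      have := (le_abs_self _).trans (hout x hx i)
      nlinarith
    · simp; linarith
  obtain ⟨Y, hYP, hmax⟩ := hPc.exists_isMaxOn ⟨_, hI⟩
    (f := fun Y : Matrix (Fin n) (Fin n) ℝ => Y.det) (Continuous.matrix_det continuous_id).continuousOn
  have hmax' : ∀ Z ∈ P, Z.det ≤ Y.det := fun Z hZ => hmax hZ
  have hd1 : (1 - δ) ^ n ≤ Y.det := by
    have := hmax' _ hI
    rwa [Matrix.det_smul, Matrix.det_one, mul_one, Fintype.card_fin] at this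
  have hdpos : 0 < Y.det := lt_of_lt_of_le (pow_pos (by linarith) _) hd1
  have hdiag1 : ∀ i, Y i i ≤ 1 := fun i => (le_abs_self _).trans
    ((Finset.single_le_sum (f := fun j => |Y i j|) (fun j _ => abs_nonneg _) (Finset.mem_univ i)).trans
        (hl1 _ (hYP i).1))
  have hdiag : ∀ i, 1 - 2 * n * δ ≤ Y i i := by
    intro i
    have h1 : Y.det ^ 2 ≤ Y i i := by
      refine (hadamard Y).trans ?_
      calc _ ≤ ∏ k, Y k k := Finset.prod_le_prod (fun k _ => Finset.sum_nonneg fun j _ => sq_nonneg _)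
            fun k _ => row_l2 (Y k) k (hl1 _ (hYP k).1) (hYP k).2
        _ ≤ Y i i := by
          rw [← Finset.mul_prod_erase _ _ (Finset.mem_univ i)]
          have : ∏ x ∈ Finset.univ.erase i, Y x x ≤ 1 :=
            Finset.prod_le_one (fun k _ => by have := (hYP k).2; linarith) fun k _ => hdiag1 k
          have := (hYP i).2
          nlinarith
    have h2 : ((1 - δ) ^ n) ^ 2 ≤ Y.det ^ 2 := pow_le_pow_left₀ (pow_nonneg (by linarith) _) hd1 2
    have h3 := one_add_mul_le_pow (a := -δ) (by linarith) (n * 2)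
    rw [← pow_mul] at h2
    push_cast at h3
    have h4 : (1 - δ) ^ (n * 2) = (1 + -δ) ^ (n * 2) := by ring
    rw [h4] at h2
    linarith
  have hvar : ∀ i, ∀ y ∈ pol K, (Y.updateRow i y).det ≤ Y.det := by
    intro i y hy
    have hyi : -1 ≤ y i := by
      have := (Finset.single_le_sum (f := fun j => |y j|) (fun j _ => abs_nonneg _) (Finset.mem_univ i)).trans
        (hl1 _ hy)
      have := neg_abs_le (y i)
      simp at *
      linarith
    have hg : 3 / 4 < Y i i := by
      have := hdiag i; linarith
    set t : ℝ := (Y i i - 3 / 4) / 2 with ht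
    have ht0 : 0 < t := by linarith
    have ht1 : t ≤ 1 := by have := hdiag1 i; linarith
    have hmem : Y.updateRow i ((1 - t) • Y i + t • y) ∈ P := by
      intro k
      by_cases hk : k = i
      · subst hk
        rw [Matrix.updateRow_self]
        refine ⟨pol_convex K (hYP k).1 hy (by linarith) ht0.le (by ring), ?_⟩
        simp
        have := hdiag1 k
        nlinarith
      · rw [Matrix.updateRow_ne hk]
        exact hYP k
    have := hmax' _ hmem
    rw [Matrix.det_updateRow_add, Matrix.det_updateRow_smul, Matrix.det_updateRow_smul, Matrix.updateRow_eq_self] at this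
    nlinarith
  have hunit : IsUnit Y.det := isUnit_iff_ne_zero.mpr hdpos.ne'
  refine ⟨Y, hdpos.ne', ?_, ?_, ?_⟩
  · intro x hx i
    have h1 := (hYP i).1 x hx
    have h2 := (hYP i).1 (-x) (hs x hx)
    rw [neg_dotProduct] at h2
    rw [Matrix.mulVec, dotProduct_comm, abs_le]
    constructor <;> linarith
  · intro i
    refine ⟨Y⁻¹.mulVec (Pi.single i 1), ?_, ?_⟩
    · by_contra hnot
      obtain ⟨y, hy, hy1⟩ := sep K hK hc.isClosed h0 _ hnot
      rw [inv_dot Y hdpos.ne', lt_div_iff₀ hdpos] at hy1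
      have := hvar i y hy
      linarith
    · rw [Matrix.mulVec_mulVec, Matrix.mul_nonsing_inv _ hunit, Matrix.one_mulVec]
  · intro z hz
    have hzz : Y.mulVec (Y⁻¹.mulVec z) = z := by
      rw [Matrix.mulVec_mulVec, Matrix.mul_nonsing_inv _ hunit, Matrix.one_mulVec]
    refine ⟨Y⁻¹.mulVec z, ?_, hzz⟩
    set x := Y⁻¹.mulVec z with hx
    apply hin
    rcases isEmpty_or_nonempty (Fin n) with he | hne
    · intro i; exact he.elim i
    obtain ⟨i, -, hi⟩ := Finset.exists_max_image Finset.univ (fun i => |x i|) Finset.univ_nonempty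
    suffices |x i| ≤ 1 from fun j => (hi j (Finset.mem_univ j)).trans this
    have h1 : z i = Y i i * x i + ∑ j ∈ Finset.univ.erase i, Y i j * x j := by
      rw [Finset.add_sum_erase _ (fun j => Y i j * x j) (Finset.mem_univ i)]
      exact (congrFun hzz i).symm
    have h2 : |∑ j ∈ Finset.univ.erase i, Y i j * x j| ≤ (1 - Y i i) * |x i| := by
      refine (Finset.abs_sum_le_sum_abs _ _).trans ?_
      calc _ ≤ ∑ j ∈ Finset.univ.erase i, |Y i j| * |x i| := Finset.sum_le_sum fun j _ => by
            rw [abs_mul]; exact mul_le_mul_of_nonneg_left (hi j (Finset.mem_univ j)) (abs_nonneg _)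
        _ = (∑ j ∈ Finset.univ.erase i, |Y i j|) * |x i| := by rw [Finset.sum_mul]
        _ ≤ _ := by
          apply mul_le_mul_of_nonneg_right _ (abs_nonneg _)
          have := hl1 _ (hYP i).1
          rw [← Finset.add_sum_erase _ _ (Finset.mem_univ i)] at this
          have := le_abs_self (Y i i)
          linarith
    have h3 : Y i i * |x i| = |Y i i * x i| := by
      have h10 : 0 ≤ Y i i := by have := (hYP i).2; linarith
      rw [abs_mul, abs_of_nonneg h10]
    have h4 : Y i i * x i = z i - ∑ j ∈ Finset.univ.erase i, Y i j * x j := by linarith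
    have h5 : |Y i i * x i| ≤ |z i| + |∑ j ∈ Finset.univ.erase i, Y i j * x j| := by
      rw [h4]; exact abs_sub _ _
    have h6 := hz i
    have h7 := hdiag i
    have h8 : (2 * Y i i - 1) * |x i| ≤ 1 - 4 * n * δ := by linarith
    have h9 := abs_nonneg (x i)
    by_contra hlt
    push Not at hlt
    nlinarith

lemma box_of_vertices {n : ℕ} (K : Set (Fin n → ℝ)) (hK : Convex ℝ K) (c : ℝ)
    (hv : ∀ v : Fin n → ℤˣ, (fun i => c * ((v i : ℤ) : ℝ)) ∈ K) (x : Fin n → ℝ)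
    (hx : ∀ i, |x i| ≤ c) : x ∈ K := by
  have h1 : (Set.univ.pi fun _ : Fin n => ({-c, c} : Set ℝ)) ⊆ K := by
    intro z hz
    have : ∀ i, ∃ u : ℤˣ, z i = c * ((u : ℤ) : ℝ) := by
      intro i
      rcases hz i (Set.mem_univ i) with h | h
      · exact ⟨-1, by simp [h]⟩
      · exact ⟨1, by simpa using h⟩
    choose v hv' using this
    have h2 : z = fun i => c * ((v i : ℤ) : ℝ) := funext hv'
    rw [h2]
    exact hv v
  apply convexHull_min h1 hK
  rw [convexHull_pi]
  intro i _
  have h2 := abs_le.mp (hx i)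
  rw [convexHull_pair, segment_eq_Icc (by linarith)]
  exact h2

lemma vol_inv {n : ℕ} (L : (Fin n → ℝ) ≃ₗ[ℝ] (Fin n → ℝ)) (K : Set (Fin n → ℝ)) :
    volume (L '' K) * volume (pol (L '' K)) = volume K * volume (pol K) := by
  set M := LinearMap.toMatrix' (L : (Fin n → ℝ) →ₗ[ℝ] (Fin n → ℝ)) with hM
  have hLM : ∀ x, L x = M.mulVec x := fun x => by
    rw [← Matrix.toLin'_apply, hM, Matrix.toLin'_toMatrix']; rfl
  have hdet : LinearMap.det (L : (Fin n → ℝ) →ₗ[ℝ] (Fin n → ℝ)) ≠ 0 := (LinearEquiv.isUnit_det' L).ne_zero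
  have hMd : LinearMap.det (Matrix.toLin' M.transpose) = LinearMap.det (L : (Fin n → ℝ) →ₗ[ℝ] (Fin n → ℝ)) := by
    rw [LinearMap.det_toLin', Matrix.det_transpose, hM, LinearMap.det_toMatrix']
  have h1 : pol (L '' K) = Matrix.toLin' M.transpose ⁻¹' pol K := by
    ext y
    simp only [pol, Set.forall_mem_image, Set.mem_preimage, Set.mem_ofPred_eq, Matrix.toLin'_apply]
    refine forall₂_congr fun x _ => ?_
    rw [hLM, Matrix.dotProduct_mulVec, Matrix.vecMul_transpose]
  have h2 := Measure.addHaar_image_linearMap volume (L : (Fin n → ℝ) →ₗ[ℝ] (Fin n → ℝ)) K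
  have h2' : volume (L '' K) = ENNReal.ofReal |LinearMap.det (L : (Fin n → ℝ) →ₗ[ℝ] (Fin n → ℝ))| * volume K := h2
  rw [h1, h2', Measure.addHaar_preimage_linearMap volume (by rw [hMd]; exact hdet), hMd]
  rw [mul_mul_mul_comm, ← ENNReal.ofReal_mul (abs_nonneg _), ← abs_mul, mul_inv_cancel₀ hdet]
  simp

lemma pi_level (n : ℕ) (hn : 2 ≤ n) : ∃ δ : ℝ, 0 < δ ∧ ∀ K : Set (Fin n → ℝ), Convex ℝ K → IsCompact K →
    (∀ x ∈ K, -x ∈ K) → (∀ x : Fin n → ℝ, (∀ i, |x i| ≤ 1) → x ∈ K) → (∀ x ∈ K, ∀ i, |x i| ≤ 1 + δ) →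
    (∀ L : (Fin n → ℝ) ≃ₗ[ℝ] (Fin n → ℝ), ¬ ∀ x, x ∈ K ↔ ∀ i, |L x i| ≤ 1) →
    (4 : ℝ≥0∞) ^ n / (n.factorial : ℝ≥0∞) < volume K * volume (pol K) := by
  obtain ⟨d0, hd0, hcore⟩ := core n hn
  have hn2 : (2 : ℝ) ≤ n := by exact_mod_cast hn
  set δ : ℝ := min d0 1 / (16 * n) with hδ
  have hm : 0 < min d0 1 := lt_min hd0 one_pos
  have hδ0 : 0 < δ := by positivity
  have hδn : 16 * n * δ = min d0 1 := by rw [hδ]; field_simp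
  have hδ1 : 16 * n * δ ≤ 1 := hδn ▸ min_le_right _ _
  have hδ2 : 16 * n * δ ≤ d0 := hδn ▸ min_le_left _ _
  refine ⟨δ, hδ0, ?_⟩
  intro K hK hc hs hin hout hne
  obtain ⟨Y, hY, hY1, hY2, hY3⟩ := position n K hK hc hs δ hδ0 (by nlinarith) (by nlinarith) hin hout
  let L : (Fin n → ℝ) ≃ₗ[ℝ] (Fin n → ℝ) :=
    LinearMap.equivOfDetNeZero (Matrix.toLin' Y) (by rwa [LinearMap.det_toLin'])
  have hL : ∀ x, L x = Y.mulVec x := fun x => rfl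
  rw [← vol_inv L K]
  set Q := L '' K with hQ
  have hQK : Convex ℝ Q := hK.linear_image (L : (Fin n → ℝ) →ₗ[ℝ] (Fin n → ℝ))
  have hQc : IsCompact Q := hc.image (LinearMap.continuous_of_finiteDimensional (L : (Fin n → ℝ) →ₗ[ℝ] (Fin n → ℝ)))
  have hQs : ∀ x ∈ Q, -x ∈ Q := by
    rintro _ ⟨x, hx, rfl⟩
    exact ⟨-x, hs x hx, map_neg L x⟩
  have hQ1 : ∀ x ∈ Q, ∀ i, |x i| ≤ 1 := by
    rintro _ ⟨x, hx, rfl⟩ i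
    exact hY1 x hx i
  have hQ2 : ∀ i (u : ℤˣ), (Pi.single i ((u : ℤ) : ℝ) : Fin n → ℝ) ∈ Q := by
    intro i u
    obtain ⟨x, hx, hxi⟩ := hY2 i
    have h1 : (Pi.single i 1 : Fin n → ℝ) ∈ Q := ⟨x, hx, hxi⟩
    rcases Int.units_eq_one_or u with h | h
    · subst h; simpa using h1
    · subst h
      have := hQs _ h1
      rw [← Pi.single_neg] at this
      simpa using this
  have hQ3 : ∀ z : Fin n → ℝ, (∀ i, |z i| ≤ 1 - 4 * n * δ) → z ∈ Q := fun z hz => hY3 z hz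
  let D : Set ℝ := {d | d ∈ Set.Icc (0 : ℝ) 1 ∧ ∀ v : Fin n → ℤˣ, (fun i => (1 - d) * ((v i : ℤ) : ℝ)) ∈ Q}
  have hDc : IsCompact D := by
    refine isCompact_Icc.of_isClosed_subset ?_ (fun d hd => hd.1)
    have : D = Set.Icc 0 1 ∩ ⋂ v : Fin n → ℤˣ, (fun d : ℝ => (fun i => (1 - d) * ((v i : ℤ) : ℝ))) ⁻¹' Q := by
      ext d; simp [D]
    rw [this]
    refine isClosed_Icc.inter (isClosed_iInter fun v => hQc.isClosed.preimage ?_)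
    fun_prop
  have habs : ∀ u : ℤˣ, |((u : ℤ) : ℝ)| = 1 := fun u => by
    rcases Int.units_eq_one_or u with h | h <;> simp [h]
  have hmem : 4 * n * δ ∈ D := by
    refine ⟨⟨by positivity, by nlinarith⟩, fun v => hQ3 _ fun i => ?_⟩
    rw [abs_mul, habs, mul_one, abs_of_nonneg]
    nlinarith
  obtain ⟨d, hdD, hdl⟩ := hDc.exists_isLeast ⟨_, hmem⟩
  have hd1 : d ≤ 4 * n * δ := hdl hmem
  have hbox : ∀ x : Fin n → ℝ, (∀ i, |x i| ≤ 1 - d) → x ∈ Q :=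
    fun x hx => box_of_vertices Q hQK (1 - d) hdD.2 x hx
  have hdpos : 0 < d := by
    rcases hdD.1.1.lt_or_eq with h | h
    · exact h
    · exfalso
      refine hne L fun x => ⟨fun hx => hQ1 _ ⟨x, hx, rfl⟩, fun hx => ?_⟩
      obtain ⟨x', hx', he⟩ := hbox (L x) (by rw [← h]; simpa using hx)
      rwa [← L.injective he]
  have hv : ∃ v : Fin n → ℤˣ, (fun i => (1 - d / 2) * ((v i : ℤ) : ℝ)) ∉ Q := by
    by_contra hcon
    push Not at hcon
    have : d / 2 ∈ D := ⟨⟨by linarith, by linarith [hdD.1.2]⟩, hcon⟩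
    have := hdl this
    linarith
  obtain ⟨v, hv⟩ := hv
  exact hcore Q hQK hQc hQ2 hQ1 d hdpos (by nlinarith) hbox v hv

end CubeMahler

/-- the cube is a *strict* local minimizer of the Mahler volume product:
if the Banach–Mazur distance from an origin-symmetric convex body `K` to the cube is
at most `1 + δ(n)` and `K` is not a parallelepiped (a linear image of the cube), then
`volₙ(K)·volₙ(K*) > 4ⁿ/n!`. -/
theorem cube_strict_local_min (n : ℕ) (hn : 2 ≤ n) :
    ∃ δ : ℝ, 0 < δ ∧
      ∀ K : Set (EuclideanSpace ℝ (Fin n)),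
        Convex ℝ K → IsCompact K → (interior K).Nonempty → K = -K →
        (∃ T : EuclideanSpace ℝ (Fin n) ≃ₗ[ℝ] EuclideanSpace ℝ (Fin n),
          cube n ⊆ T '' K ∧ T '' K ⊆ (1 + δ) • cube n) →
        (∀ S : EuclideanSpace ℝ (Fin n) ≃ₗ[ℝ] EuclideanSpace ℝ (Fin n),
          K ≠ S '' cube n) →
        volume K * volume (polarBody K) > (4 : ℝ≥0∞) ^ n / (n.factorial : ℝ≥0∞) := by
  obtain ⟨δ, hδ, h⟩ := CubeMahler.pi_level n hn
  refine ⟨δ, hδ, ?_⟩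
  rintro K hK hc - hs ⟨T, hT1, hT2⟩ hS
  let e : EuclideanSpace ℝ (Fin n) ≃ₗ[ℝ] (Fin n → ℝ) := WithLp.linearEquiv 2 ℝ (Fin n → ℝ)
  have he : ∀ x i, e x i = x i := fun x i => rfl
  have hvol : ∀ A : Set (EuclideanSpace ℝ (Fin n)), volume A = volume (e '' A) := by
    intro A
    have h1 := (PiLp.volume_preserving_toLp (Fin n)).measure_preimage_equiv
      (f := (MeasurableEquiv.toLp 2 (Fin n → ℝ))) A
    rw [← h1]
    congr 1
    exact (e.toEquiv.image_eq_preimage_symm A).symm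
  have hpol : e '' polarBody K = CubeMahler.pol (e '' K) := by
    ext y
    rw [LinearEquiv.image_eq_preimage_symm]
    simp only [CubeMahler.pol, polarBody, Set.forall_mem_image, Set.mem_preimage, Set.mem_ofPred_eq]
    refine forall₂_congr fun x _ => ?_
    have : ⟪x, e.symm y⟫ = e x ⬝ᵥ y := by
      rw [PiLp.inner_apply]
      refine Finset.sum_congr rfl fun i _ => ?_
      rw [real_inner_comm]
      rfl
    rw [this]
  let L : (Fin n → ℝ) ≃ₗ[ℝ] (Fin n → ℝ) := (e.symm.trans T).trans e
  have hLe : ∀ x, L (e x) = e (T x) := fun x => by simp [L]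
  rw [hvol K, hvol (polarBody K), hpol, gt_iff_lt, ← CubeMahler.vol_inv L (e '' K)]
  have hLK : L '' (e '' K) = e '' (T '' K) := by
    rw [Set.image_image, Set.image_image]
    exact Set.image_congr fun x _ => hLe x
  rw [hLK]
  apply h
  · exact (hK.linear_image T.toLinearMap).linear_image e.toLinearMap
  · exact (hc.image (LinearMap.continuous_of_finiteDimensional T.toLinearMap)).image
      (LinearMap.continuous_of_finiteDimensional e.toLinearMap)
  · rintro _ ⟨_, ⟨x, hx, rfl⟩, rfl⟩
    refine ⟨T (-x), ⟨-x, ?_, rfl⟩, by simp⟩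
    rw [hs] at hx
    exact hx
  · intro x hx
    refine ⟨e.symm x, hT1 ?_, by simp⟩
    exact hx
  · rintro _ ⟨x, hx, rfl⟩ i
    obtain ⟨z, hz, rfl⟩ := hT2 hx
    have h1 : e ((1 + δ) • z) i = (1 + δ) * z i := rfl
    have h2 : |z i| ≤ 1 := hz i
    have h3 : (fun x => (1 + δ) • x) z = (1 + δ) • z := rfl
    rw [h3, h1, abs_mul, abs_of_pos (by linarith)]
    nlinarith
  · intro M hM
    let A : EuclideanSpace ℝ (Fin n) ≃ₗ[ℝ] EuclideanSpace ℝ (Fin n) := ((T.trans e).trans M).trans e.symm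
    apply hS A.symm
    rw [LinearEquiv.image_symm_eq_preimage]
    ext x
    have h1 := hM (e (T x))
    rw [e.injective.mem_set_image, T.injective.mem_set_image] at h1
    exact h1
end
end

section
/- Let P ⊂ ℝⁿ be a convex polytope (the convex hull of a finite set) with 0 in its interior, and let P* be its polar. Let F be a nonempty exposed face of P with F ≠ P, let F* = {y ∈ P* : ⟨x,y⟩ = 1 for all x ∈ F} be the dual face (assumed nonempty), and fix points x in the relative interior of F and x* in the relative interior of F*. Then there exists C > 0 (depending on P, F, F*, x, x* but not on K or δ) such that for every δ ∈ (0, 1/2) and every convex body K satisfying (1−δ)·P ⊆ K ⊆ P, there exist points y ∈ ∂K and y* ∈ ∂K* with ⟨y, y*⟩ = 1, ‖y − x‖ ≤ Cδ, and ‖y* − x*‖ ≤ Cδ. -/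
open MeasureTheory RealInnerProductSpace ENNReal Pointwise

noncomputable section

section Helpers

variable {n : ℕ}

lemma aux_intrinsic {F : Set (EuclideanSpace ℝ (Fin n))} {x : EuclideanSpace ℝ (Fin n)}
    (hx : x ∈ intrinsicInterior ℝ F) :
    ∃ ε : ℝ, 0 < ε ∧ ∀ u ∈ vectorSpan ℝ F, ‖u‖ ≤ ε → x + u ∈ F := by
  obtain ⟨z, hz, rfl⟩ := hx
  obtain ⟨ε, hε, hb⟩ := Metric.isOpen_iff.1 isOpen_interior z hz
  refine ⟨ε / 2, by positivity, fun u hu hun => ?_⟩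
  have hm : (z : EuclideanSpace ℝ (Fin n)) + u ∈ affineSpan ℝ F := by
    have := AffineSubspace.vadd_mem_of_mem_direction
      (by rw [direction_affineSpan]; exact hu) z.2
    rwa [vadd_eq_add, add_comm] at this
  have := hb (show (⟨_, hm⟩ : affineSpan ℝ F) ∈ Metric.ball z ε by
    rw [Metric.mem_ball, Subtype.dist_eq, dist_eq_norm]
    simp only [add_sub_cancel_left]
    linarith)
  have h2 : (⟨_, hm⟩ : affineSpan ℝ F) ∈ ((↑) ⁻¹' F : Set (affineSpan ℝ F)) :=
    interior_subset this
  exact h2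

lemma aux_small {P : Set (EuclideanSpace ℝ (Fin n))}
    (h0P : (0 : EuclideanSpace ℝ (Fin n)) ∈ interior P) (p : EuclideanSpace ℝ (Fin n)) :
    ∃ t : ℝ, 0 < t ∧ t • p ∈ P := by
  have hc : Filter.Tendsto (fun t : ℝ => t • p) (nhds 0) (nhds 0) := by
    have : Continuous (fun t : ℝ => t • p) := by fun_prop
    simpa using this.tendsto 0
  have h1 := hc (mem_interior_iff_mem_nhds.1 h0P)
  obtain ⟨ε, hε, hb⟩ := Metric.mem_nhds_iff.1 h1
  refine ⟨ε / 2, by positivity, hb (show ε / 2 ∈ Metric.ball (0 : ℝ) ε from ?_)⟩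
  rw [Metric.mem_ball, Real.dist_eq, sub_zero, abs_of_pos (by positivity)]
  linarith

lemma aux_lt {P F Fstar : Set (EuclideanSpace ℝ (Fin n))}
    (h0P : (0 : EuclideanSpace ℝ (Fin n)) ∈ interior P)
    (hF : IsExposed ℝ P F) (hFP : F ≠ P)
    (hFstar : Fstar = {y ∈ polarBody P | ∀ x ∈ F, ⟪x, y⟫ = 1})
    {x xstar : EuclideanSpace ℝ (Fin n)}
    (hxF : x ∈ F) (hxstar : xstar ∈ intrinsicInterior ℝ Fstar) :
    ∀ v ∈ P, v ∉ F → ⟪v, xstar⟫ < 1 := by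
  obtain ⟨l, hl⟩ := hF ⟨x, hxF⟩
  have hxs : xstar ∈ Fstar := intrinsicInterior_subset hxstar
  have h0 : (0 : EuclideanSpace ℝ (Fin n)) ∈ P := interior_subset h0P
  have hx' := hxF
  rw [hl] at hx'
  have hle : ∀ p ∈ P, l p ≤ l x := hx'.2
  have hlt : ∀ p ∈ P, p ∉ F → l p < l x := by
    intro p hp hpF
    refine lt_of_le_of_ne (hle p hp) fun h => hpF ?_
    rw [hl]
    exact ⟨hp, fun y hy => h ▸ hle y hy⟩
  have heq : ∀ f ∈ F, l f = l x := by
    intro f hf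
    rw [hl] at hf
    exact le_antisymm (hle f hf.1) (hf.2 x hx'.1)
  have hm0 : 0 ≤ l x := by simpa using hle 0 h0
  have hm : 0 < l x := by
    refine lt_of_le_of_ne hm0 fun h => hFP ?_
    refine Set.Subset.antisymm (fun f hf => by rw [hl] at hf; exact hf.1) fun p hp => ?_
    by_contra hpF
    have h1 := hlt p hp hpF
    obtain ⟨t, ht, htp⟩ := aux_small h0P (-p)
    have h2 := hle _ htp
    rw [map_smul, map_neg, smul_eq_mul] at h2
    nlinarith
  set a := (InnerProductSpace.toDual ℝ (EuclideanSpace ℝ (Fin n))).symm l with ha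
  have hal : ∀ p, ⟪p, a⟫ = l p := by
    intro p
    rw [real_inner_comm, ha, InnerProductSpace.toDual_symm_apply]
  set b := (l x)⁻¹ • a with hb
  have hbl : ∀ p, ⟪p, b⟫ = (l x)⁻¹ * l p := by
    intro p
    rw [hb, inner_smul_right, hal]
  have hbF : b ∈ Fstar := by
    rw [hFstar]
    refine ⟨fun p hp => ?_, fun f hf => ?_⟩
    · rw [hbl, inv_mul_le_iff₀ hm]; simpa using hle p hp
    · rw [hbl, heq f hf, inv_mul_cancel₀ hm.ne']
  obtain ⟨ε, hε, hE⟩ := aux_intrinsic hxstar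
  intro v hv hvF
  have hvb : ⟪v, b⟫ < 1 := by
    rw [hbl, inv_mul_lt_iff₀ hm]; simpa using hlt v hv hvF
  set s := ε / (1 + ‖xstar - b‖) with hs
  have hs0 : 0 < s := by positivity
  have hmem := hE (s • (xstar - b)) (Submodule.smul_mem _ _ (vsub_mem_vectorSpan ℝ hxs hbF)) (by
    rw [norm_smul, Real.norm_of_nonneg hs0.le, hs, div_mul_eq_mul_div, div_le_iff₀ (by positivity)]
    nlinarith [norm_nonneg (xstar - b)])
  rw [hFstar] at hmem
  have h3 := hmem.1 v hv
  rw [inner_add_right, inner_smul_right, inner_sub_right] at h3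
  nlinarith

lemma aux_dual {P F : Set (EuclideanSpace ℝ (Fin n))} (V : Finset (EuclideanSpace ℝ (Fin n)))
    (hP : P = convexHull ℝ (V : Set (EuclideanSpace ℝ (Fin n))))
    {xstar : EuclideanSpace ℝ (Fin n)}
    (hle : ∀ v ∈ P, ⟪v, xstar⟫ ≤ 1)
    (hlt : ∀ v ∈ P, v ∉ F → ⟪v, xstar⟫ < 1) :
    ∃ ε : ℝ, 0 < ε ∧ ∀ b : EuclideanSpace ℝ (Fin n), (∀ f ∈ F, ⟪f, b⟫ = 0) → ‖b‖ ≤ ε →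
      xstar + b ∈ polarBody P := by
  have key : ∀ W : Finset (EuclideanSpace ℝ (Fin n)), (∀ v ∈ W, v ∈ P) →
      ∃ ε : ℝ, 0 < ε ∧ ∀ b : EuclideanSpace ℝ (Fin n), (∀ f ∈ F, ⟪f, b⟫ = 0) → ‖b‖ ≤ ε →
      ∀ v ∈ W, ⟪v, xstar + b⟫ ≤ 1 := by
    classical
    intro W
    induction W using Finset.induction_on with
    | empty => exact fun _ => ⟨1, one_pos, by simp⟩
    | insert v W hvW ih =>
      intro hW
      obtain ⟨ε, hε, h⟩ := ih fun w hw => hW w (Finset.mem_insert_of_mem hw)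
      have hvP := hW v (Finset.mem_insert_self _ _)
      by_cases hvF : v ∈ F
      · refine ⟨ε, hε, fun b hb hbn w hw => ?_⟩
        rcases Finset.mem_insert.1 hw with rfl | hw
        · rw [inner_add_right, hb _ hvF, add_zero]; exact hle _ hvP
        · exact h b hb hbn w hw
      · have h1 := hlt v hvP hvF
        have hpos : 0 < (1 - ⟪v, xstar⟫) / (1 + ‖v‖) := div_pos (by linarith) (by positivity)
        refine ⟨min ε ((1 - ⟪v, xstar⟫) / (1 + ‖v‖)), lt_min hε hpos, fun b hb hbn w hw => ?_⟩
        rcases Finset.mem_insert.1 hw with rfl | hw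
        · have h2 := hbn.trans (min_le_right _ _)
          rw [le_div_iff₀ (by positivity)] at h2
          rw [inner_add_right]
          have h3 := real_inner_le_norm w b
          nlinarith [norm_nonneg b]
        · exact h b hb (hbn.trans (min_le_left _ _)) w hw
  obtain ⟨ε, hε, h⟩ := key V fun v hv => by rw [hP]; exact subset_convexHull ℝ _ hv
  refine ⟨ε, hε, fun b hb hbn p hp => ?_⟩
  have hconv : Convex ℝ {p : EuclideanSpace ℝ (Fin n) | ⟪p, xstar + b⟫ ≤ 1} := by
    intro p hp q hq s t hs ht hst
    simp only [Set.mem_ofPred_eq] at hp hq ⊢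
    rw [inner_add_left, real_inner_smul_left, real_inner_smul_left]
    nlinarith
  rw [hP] at hp
  exact convexHull_min (fun v hv => h b hb hbn v hv) hconv hp

lemma aux_span {F : Set (EuclideanSpace ℝ (Fin n))} {x xstar : EuclideanSpace ℝ (Fin n)}
    (hxF : x ∈ F) (h1 : ∀ f ∈ F, ⟪f, xstar⟫ = 1) (u : EuclideanSpace ℝ (Fin n))
    (hu : u ∈ Submodule.span ℝ F) : u - ⟪u, xstar⟫ • x ∈ vectorSpan ℝ F := by
  induction hu using Submodule.span_induction with
  | mem f hf => rw [h1 f hf, one_smul]; exact vsub_mem_vectorSpan ℝ hf hxF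
  | zero => simp
  | add u v _ _ hu hv =>
    have := Submodule.add_mem _ hu hv
    convert this using 1
    rw [inner_add_left]; module
  | smul c u _ hu =>
    have := Submodule.smul_mem _ c hu
    convert this using 1
    rw [real_inner_smul_left]; module

/-- Hahn-Banach step: a maximizer of `xstar` on a slice. -/
lemma aux_hb {K : Set (EuclideanSpace ℝ (Fin n))} (hK : Convex ℝ K) (hKc : IsCompact K)
    (h0 : (0 : EuclideanSpace ℝ (Fin n)) ∈ interior K)
    (L : Submodule ℝ (EuclideanSpace ℝ (Fin n))) (x xstar y : EuclideanSpace ℝ (Fin n))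
    (hxL : x ∈ L) (hx1 : ⟪x, xstar⟫ = 1) (hyK : y ∈ K) (hyL : y ∈ L)
    (hM : 0 < ⟪y, xstar⟫) (hmax : ∀ z ∈ K, z ∈ L → ⟪z, xstar⟫ ≤ ⟪y, xstar⟫) :
    y ∈ frontier K ∧ ∃ ystar ∈ frontier (polarBody K), ⟪y, ystar⟫ = 1 ∧
      ∀ d ∈ L, ⟪d, ystar⟫ = ⟪y, xstar⟫⁻¹ * ⟪d, xstar⟫ := by
  set M := ⟪y, xstar⟫ with hMdef
  set T : Set (EuclideanSpace ℝ (Fin n)) := {z | z ∈ L ∧ ⟪z, xstar⟫ = M} with hT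
  have hTc : Convex ℝ T := by
    rintro p ⟨hp, hp'⟩ q ⟨hq, hq'⟩ s t hs ht hst
    refine ⟨L.add_mem (L.smul_mem _ hp) (L.smul_mem _ hq), ?_⟩
    rw [inner_add_left, real_inner_smul_left, real_inner_smul_left, hp', hq', ← add_mul, hst,
      one_mul]
  have hdisj : Disjoint (interior K) T := by
    rw [Set.disjoint_left]
    rintro z hz ⟨hzL, hzM⟩
    have hc : Filter.Tendsto (fun t : ℝ => z + t • x) (nhds 0) (nhds z) := by
      have : Continuous (fun t : ℝ => z + t • x) := by fun_prop
      simpa using this.tendsto 0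
    obtain ⟨ε, hε, hb⟩ := Metric.mem_nhds_iff.1 (hc (mem_interior_iff_mem_nhds.1 hz))
    have h1 : z + (ε / 2) • x ∈ K := hb (show ε / 2 ∈ Metric.ball (0 : ℝ) ε by
      rw [Metric.mem_ball, Real.dist_eq, sub_zero, abs_of_pos (by positivity)]
      linarith)
    have h2 := hmax _ h1 (L.add_mem hzL (L.smul_mem _ hxL))
    rw [inner_add_left, real_inner_smul_left, hx1, hzM] at h2
    linarith
  obtain ⟨f, u, hf1, hf2⟩ := geometric_hahn_banach_open hK.interior isOpen_interior hTc hdisj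
  have hcl : ∀ k ∈ K, f k ≤ u := by
    intro k hk
    have hk' : k ∈ closure (interior K) := by
      rw [hK.closure_interior_eq_closure_of_nonempty_interior ⟨0, h0⟩]
      exact subset_closure hk
    have hsub : closure (interior K) ⊆ {z | f z ≤ u} :=
      closure_minimal (fun z hz => (hf1 z hz).le) (isClosed_le f.continuous continuous_const)
    exact hsub hk'
  have hfy : f y = u := le_antisymm (hcl y hyK) (hf2 y ⟨hyL, rfl⟩)
  have hu : 0 < u := by simpa using hf1 0 h0
  have hyfr : y ∈ frontier K := by
    rw [hKc.isClosed.frontier_eq]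
    exact ⟨hyK, fun h => (hf1 y h).ne hfy⟩
  set ys := u⁻¹ • (InnerProductSpace.toDual ℝ (EuclideanSpace ℝ (Fin n))).symm f with hys
  have hin : ∀ p, ⟪p, ys⟫ = u⁻¹ * f p := by
    intro p
    rw [hys, inner_smul_right, real_inner_comm, InnerProductSpace.toDual_symm_apply]
  have hy1 : ⟪y, ys⟫ = 1 := by rw [hin, hfy, inv_mul_cancel₀ hu.ne']
  have hpol : ys ∈ polarBody K := by
    intro k hk
    rw [hin, inv_mul_le_iff₀ hu]; simpa using hcl k hk
  refine ⟨hyfr, ys, ⟨subset_closure hpol, fun hysint => ?_⟩, hy1, ?_⟩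
  · have hc : Filter.Tendsto (fun t : ℝ => ys + t • ys) (nhds 0) (nhds ys) := by
      have : Continuous (fun t : ℝ => ys + t • ys) := by fun_prop
      simpa using this.tendsto 0
    obtain ⟨ε, hε, hb⟩ := Metric.mem_nhds_iff.1 (hc (mem_interior_iff_mem_nhds.1 hysint))
    have h1 : ys + (ε / 2) • ys ∈ polarBody K := hb (show ε / 2 ∈ Metric.ball (0 : ℝ) ε by
      rw [Metric.mem_ball, Real.dist_eq, sub_zero, abs_of_pos (by positivity)]
      linarith)
    have h2 := h1 y hyK
    rw [inner_add_right, inner_smul_right y ys (ε / 2), hy1] at h2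
    linarith
  · have hker : ∀ d ∈ L, ⟪d, xstar⟫ = 0 → f d = 0 := by
      intro d hd hd0
      have h1 := hf2 (y + d) ⟨L.add_mem hyL hd, by rw [inner_add_left, hd0, add_zero]⟩
      have h2 := hf2 (y - d) ⟨L.sub_mem hyL hd, by rw [inner_sub_left, hd0, sub_zero]⟩
      rw [map_add] at h1
      rw [map_sub] at h2
      linarith
    intro d hd
    have h1 := hker (d - (M⁻¹ * ⟪d, xstar⟫) • y) (L.sub_mem hd (L.smul_mem _ hyL)) (by
      rw [inner_sub_left, real_inner_smul_left, ← hMdef]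
      field_simp
      ring)
    rw [map_sub, map_smul, smul_eq_mul, hfy] at h1
    rw [hin, sub_eq_zero.1 h1]
    field_simp

end Helpers

/-- Lemma 6: let `P` be a convex polytope with `0` in its interior, `F` a
nonempty proper exposed face of `P`, `F*` its dual face in `P*`, and fix `x`, `x*` in the
relative interiors of `F`, `F*`. Then there is `C > 0` such that whenever
`(1−δ)P ⊆ K ⊆ P`, there are `y ∈ ∂K`, `y* ∈ ∂K*` with `⟨y, y*⟩ = 1`, `‖y − x‖ ≤ Cδ`
and `‖y* − x*‖ ≤ Cδ`. -/
theorem dual_points_near_dual_faces (n : ℕ)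
    (V : Finset (EuclideanSpace ℝ (Fin n)))
    (P : Set (EuclideanSpace ℝ (Fin n)))
    (hP : P = convexHull ℝ (V : Set (EuclideanSpace ℝ (Fin n))))
    (h0P : (0 : EuclideanSpace ℝ (Fin n)) ∈ interior P)
    (F : Set (EuclideanSpace ℝ (Fin n)))
    (hF : IsExposed ℝ P F) (hFne : F.Nonempty) (hFP : F ≠ P)
    (Fstar : Set (EuclideanSpace ℝ (Fin n)))
    (hFstar : Fstar = {y ∈ polarBody P | ∀ x ∈ F, ⟪x, y⟫ = 1})
    (x xstar : EuclideanSpace ℝ (Fin n))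
    (hx : x ∈ intrinsicInterior ℝ F) (hxstar : xstar ∈ intrinsicInterior ℝ Fstar) :
    ∃ C : ℝ, 0 < C ∧
      ∀ δ : ℝ, 0 < δ → δ < 1 / 2 →
        ∀ K : Set (EuclideanSpace ℝ (Fin n)),
          Convex ℝ K → IsCompact K → (interior K).Nonempty →
          (1 - δ) • P ⊆ K → K ⊆ P →
          ∃ y ∈ frontier K, ∃ ystar ∈ frontier (polarBody K),
            ⟪y, ystar⟫ = 1 ∧ ‖y - x‖ ≤ C * δ ∧ ‖ystar - xstar‖ ≤ C * δ := by
  have hxF : x ∈ F := intrinsicInterior_subset hx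
  have hxs : xstar ∈ Fstar := intrinsicInterior_subset hxstar
  have hlt := aux_lt h0P hF hFP hFstar hxF hxstar
  rw [hFstar] at hxs
  obtain ⟨hxsP, hxs1⟩ := hxs
  have hFsub : F ⊆ P := hF.subset
  obtain ⟨ε₁, hε₁, hdual⟩ := aux_dual V hP hxsP hlt
  obtain ⟨ε₂, hε₂, hprim⟩ := aux_intrinsic hx
  have hx1 : ⟪x, xstar⟫ = 1 := hxs1 x hxF
  set C₁ : ℝ := ‖x‖ + (1 + ‖x‖ * ‖xstar‖) / ε₁ with hC₁
  set C₂ : ℝ := 2 * ‖xstar‖ + 2 * (1 + ‖x‖ * ‖xstar‖) / ε₂ with hC₂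
  have hC₁0 : 0 < C₁ := by positivity
  have hC₂0 : 0 < C₂ := by positivity
  refine ⟨C₁ + C₂, by positivity, ?_⟩
  intro δ hδ hδ2 K hK hKc _ hPK hKP
  have h1δ : 0 < 1 - δ := by linarith
  have h0K : (0 : EuclideanSpace ℝ (Fin n)) ∈ interior K := by
    have h1 : (0 : EuclideanSpace ℝ (Fin n)) ∈ interior ((1 - δ) • P) := by
      rw [interior_smul₀ h1δ.ne']
      exact ⟨0, h0P, by simp⟩
    exact interior_mono hPK h1
  set S := Submodule.span ℝ F with hS
  set L : Submodule ℝ (EuclideanSpace ℝ (Fin n)) := Submodule.span ℝ {x} ⊔ Sᗮ with hL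
  have hxL : x ∈ L := Submodule.mem_sup_left (Submodule.mem_span_singleton_self x)
  have hSL : ∀ b ∈ Sᗮ, b ∈ L := fun b hb => Submodule.mem_sup_right hb
  have hxK : (1 - δ) • x ∈ K := hPK (Set.smul_mem_smul_set (hFsub hxF))
  have hcomp : IsCompact (K ∩ (L : Set (EuclideanSpace ℝ (Fin n)))) :=
    hKc.inter_right L.closed_of_finiteDimensional
  obtain ⟨y, ⟨hyK, hyL⟩, hymax⟩ := hcomp.exists_isMaxOn ⟨_, hxK, L.smul_mem _ hxL⟩
    (f := fun z => ⟪z, xstar⟫) (by fun_prop)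
  have hmax : ∀ z ∈ K, z ∈ L → ⟪z, xstar⟫ ≤ ⟪y, xstar⟫ := fun z hz hz' => hymax ⟨hz, hz'⟩
  have hM1 : 1 - δ ≤ ⟪y, xstar⟫ := by
    have := hmax _ hxK (L.smul_mem _ hxL)
    rwa [real_inner_smul_left, hx1, mul_one] at this
  have hM2 : ⟪y, xstar⟫ ≤ 1 := hxsP y (hKP hyK)
  have hM0 : 0 < ⟪y, xstar⟫ := by linarith
  obtain ⟨hyfr, ys, hysfr, hyys, hysL⟩ :=
    aux_hb hK hKc h0K L x xstar y hxL hx1 hyK hyL hM0 hmax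
  have hyspol : ∀ k ∈ K, ⟪k, ys⟫ ≤ 1 := by
    have hclosed : IsClosed (polarBody K) := by
      have : polarBody K = ⋂ k ∈ K, {ξ | ⟪k, ξ⟫ ≤ 1} := by
        ext ξ; simp [polarBody]
      rw [this]
      exact isClosed_biInter fun k _ => isClosed_le (by fun_prop) continuous_const
    exact hclosed.frontier_subset hysfr
  set M := ⟪y, xstar⟫ with hMdef
  refine ⟨y, hyfr, ys, hysfr, hyys, ?_, ?_⟩
  · -- primal estimate
    obtain ⟨p, hp, b, hb, hpb⟩ := Submodule.mem_sup.1 hyL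
    obtain ⟨t, rfl⟩ := Submodule.mem_span_singleton.1 hp
    have hbF : ∀ f ∈ F, ⟪f, b⟫ = 0 := fun f hf =>
      Submodule.inner_right_of_mem_orthogonal (Submodule.subset_span hf) hb
    have hbn : ε₁ * ‖b‖ ≤ δ := by
      rcases eq_or_ne b 0 with rfl | hb0
      · simpa using hδ.le
      have hbpos : 0 < ‖b‖ := norm_pos_iff.2 hb0
      have h1 := hdual ((ε₁ / ‖b‖) • b) (fun f hf => by
        rw [inner_smul_right, hbF f hf, mul_zero]) (by
        rw [norm_smul, Real.norm_of_nonneg (by positivity)]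
        field_simp
        exact le_rfl) y (hKP hyK)
      have h2 : ⟪y, b⟫ = ‖b‖ * ‖b‖ := by
        rw [← hpb, inner_add_left, real_inner_smul_left, hbF x hxF, real_inner_self_eq_norm_mul_norm]
        ring
      rw [inner_add_right, inner_smul_right, h2, ← hMdef] at h1
      have h3 : ε₁ / ‖b‖ * (‖b‖ * ‖b‖) = ε₁ * ‖b‖ := by field_simp
      linarith
    have hbn' : ‖b‖ ≤ δ / ε₁ := by rw [le_div_iff₀ hε₁]; linarith
    have hMt : M = t + ⟪b, xstar⟫ := by
      rw [hMdef, ← hpb, inner_add_left, real_inner_smul_left, hx1, mul_one]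
    have ht : |t - 1| ≤ δ + ‖b‖ * ‖xstar‖ := by
      have := abs_le.1 (abs_real_inner_le_norm b xstar)
      rw [abs_le]; constructor <;> linarith
    have hyx : y - x = (t - 1) • x + b := by rw [← hpb]; module
    have h4 : ‖y - x‖ ≤ |t - 1| * ‖x‖ + ‖b‖ := by
      rw [hyx]
      refine (norm_add_le _ _).trans ?_
      rw [norm_smul, Real.norm_eq_abs]
    have h5 : ‖y - x‖ ≤ C₁ * δ := by
      calc ‖y - x‖ ≤ (δ + ‖b‖ * ‖xstar‖) * ‖x‖ + ‖b‖ := h4.trans (by gcongr)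
        _ ≤ (δ + δ / ε₁ * ‖xstar‖) * ‖x‖ + δ / ε₁ := by gcongr
        _ = C₁ * δ := by rw [hC₁]; ring
    nlinarith
  · -- dual estimate
    set w := ys - M⁻¹ • xstar with hw
    have hwL : ∀ d ∈ L, ⟪d, w⟫ = 0 := by
      intro d hd
      rw [hw, inner_sub_right, inner_smul_right, hysL d hd, sub_self]
    have hwS : w ∈ S := by
      rw [← Submodule.orthogonal_orthogonal S]
      exact (Submodule.mem_orthogonal _ _).2 fun b hb => hwL b (hSL b hb)
    have hMi : 1 ≤ M⁻¹ := (one_le_inv₀ hM0).2 hM2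
    have hMi2 : M⁻¹ ≤ 1 + 2 * δ := by
      rw [inv_le_iff_one_le_mul₀ hM0]
      nlinarith
    set a := w - ⟪w, xstar⟫ • x with ha
    have haV : a ∈ vectorSpan ℝ F := aux_span hxF hxs1 w hwS
    have hax : ⟪a, xstar⟫ = 0 := by
      rw [ha, inner_sub_left, real_inner_smul_left, hx1]; ring
    have haw : ⟪a, w⟫ = ‖w‖ * ‖w‖ := by
      rw [ha, inner_sub_left, real_inner_smul_left, hwL x hxL, real_inner_self_eq_norm_mul_norm]
      ring
    have han : ‖a‖ ≤ (1 + ‖x‖ * ‖xstar‖) * ‖w‖ := by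
      calc ‖a‖ ≤ ‖w‖ + ‖⟪w, xstar⟫ • x‖ := norm_sub_le _ _
        _ = ‖w‖ + |⟪w, xstar⟫| * ‖x‖ := by rw [norm_smul, Real.norm_eq_abs]
        _ ≤ ‖w‖ + (‖w‖ * ‖xstar‖) * ‖x‖ := by
          gcongr; exact abs_real_inner_le_norm _ _
        _ = _ := by ring
    have hays : ⟪a, ys⟫ = ‖w‖ * ‖w‖ := by
      have : ys = w + M⁻¹ • xstar := by rw [hw]; module
      rw [this, inner_add_right, inner_smul_right, hax, haw]; ring
    have hxys : ⟪x, ys⟫ = M⁻¹ := by rw [hysL x hxL, hx1, mul_one]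
    have hkey : ε₂ * (‖w‖ * ‖w‖) ≤ 2 * δ * ‖a‖ := by
      rcases eq_or_ne a 0 with h | ha0
      · rw [← hays, h]; simp
      have hapos : 0 < ‖a‖ := norm_pos_iff.2 ha0
      have h1 := hprim ((ε₂ / ‖a‖) • a) (Submodule.smul_mem _ _ haV) (by
        rw [norm_smul, Real.norm_of_nonneg (by positivity)]
        field_simp
        exact le_rfl)
      have h2 := hyspol _ (hPK (Set.smul_mem_smul_set (hFsub h1)))
      rw [real_inner_smul_left, inner_add_left, real_inner_smul_left, hays, hxys] at h2
      have h3 : ε₂ / ‖a‖ * (‖w‖ * ‖w‖) ≤ 2 * δ := by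
        set q := ε₂ / ‖a‖ * (‖w‖ * ‖w‖)
        nlinarith
      rw [div_mul_eq_mul_div, div_le_iff₀ hapos] at h3
      exact h3
    have hwn : ‖w‖ ≤ 2 * (1 + ‖x‖ * ‖xstar‖) / ε₂ * δ := by
      rcases eq_or_ne w 0 with h | hw0
      · rw [h, norm_zero]; positivity
      have hwpos : 0 < ‖w‖ := norm_pos_iff.2 hw0
      have h1 : (ε₂ * ‖w‖) * ‖w‖ ≤ (2 * δ * (1 + ‖x‖ * ‖xstar‖)) * ‖w‖ := by
        have := mul_le_mul_of_nonneg_left han (by positivity : 0 ≤ 2 * δ)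
        nlinarith
      have h2 := le_of_mul_le_mul_right h1 hwpos
      rw [div_mul_eq_mul_div, le_div_iff₀ hε₂]
      linarith
    have hfin : ‖ys - xstar‖ ≤ C₂ * δ := by
      have : ys - xstar = (M⁻¹ - 1) • xstar + w := by rw [hw]; module
      rw [this]
      calc ‖(M⁻¹ - 1) • xstar + w‖ ≤ ‖(M⁻¹ - 1) • xstar‖ + ‖w‖ := norm_add_le _ _
        _ = (M⁻¹ - 1) * ‖xstar‖ + ‖w‖ := by
          rw [norm_smul, Real.norm_of_nonneg (by linarith)]
        _ ≤ (2 * δ) * ‖xstar‖ + 2 * (1 + ‖x‖ * ‖xstar‖) / ε₂ * δ := by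
          gcongr; linarith
        _ = C₂ * δ := by rw [hC₂]; ring
    nlinarith
end
end
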